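/- arXiv:1211.4514 — 2 statements merged into one kernel-verified Lean document; each statement's English description precedes it below -/
import Mathlib

section
/- One has ∫_{v=-2}^{-2/3} (1/√(−v(2+v))) · arccos( 1 / √(1 + 2v + 3v²) ) dv = (π/2) · arccos(1/3). -/
open Real

/-!
With the substitution `v = -2 + 4 / (w ^ 2 + 3)` the tangent of the half dihedral angle becomes
`w * s`, where `s = √(-v * (2 + v))`. Writing `arctan (w * s) / s` as the integral of
`w / (1 + (t * w * s) ^ 2)` over `t ∈ [0, 1]` and integrating over `w` first leaves
`∫ w ^ 2 / (p ^ 2 * w ^ 4 + b * w ^ 2 + q ^ 2)` over `w > 0`, which the Cauchy–Schlömilch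
substitution `y = p * w - q / w` reduces to `∫ 1 / (1 + y ^ 2)`. The remaining integral over `t`
has an explicit arctangent as antiderivative. All of this works when the second disk has an
arbitrary radius `ρ` and still touches the first one; `ρ = 1` gives two unit disks.
-/

open MeasureTheory Set

section CauchySchlomilch

variable {E : Type*} [NormedAddCommGroup E] [NormedSpace ℝ E] {p q : ℝ}

lemma hasDerivAt_const_div_id (s : ℝ) {w : ℝ} (hw : w ≠ 0) :
    HasDerivAt (fun w ↦ s / w) (-(s / w ^ 2)) w :=
  ((hasDerivAt_id w).fun_inv hw |>.const_mul s).congr_deriv (by rw [id]; field_simp)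

lemma integral_Ioi_comp_const_div (g : ℝ → E) {s : ℝ} (hs : 0 < s) :
    ∫ w in Ioi 0, (s / w ^ 2) • g (s / w) = ∫ w in Ioi 0, g w := by
  have himage : (fun w ↦ s / w) '' Ioi 0 = Ioi 0 := by
    ext y
    refine ⟨?_, fun hy : 0 < y ↦ ⟨s / y, div_pos hs hy, div_div_cancel₀ hs.ne'⟩⟩
    rintro ⟨w, hw, rfl⟩
    exact div_pos hs hw
  have hanti : AntitoneOn (fun w ↦ s / w) (Ioi 0) := fun _ ha _ _ hab ↦
    div_le_div_of_nonneg_left hs.le ha hab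
  conv_rhs => rw [← himage]
  rw [integral_image_eq_integral_deriv_smul_of_antitoneOn measurableSet_Ioi
    (fun w hw ↦ (hasDerivAt_const_div_id s hw.ne').hasDerivWithinAt) hanti]
  simp only [neg_neg]

lemma hasDerivAt_mul_sub_div (p q : ℝ) {w : ℝ} (hw : w ≠ 0) :
    HasDerivAt (fun w ↦ p * w - q / w) (p + q / w ^ 2) w :=
  (((hasDerivAt_id w).const_mul p).sub (hasDerivAt_const_div_id q hw)).congr_deriv (by ring)

lemma monotoneOn_mul_sub_div (hp : 0 ≤ p) (hq : 0 ≤ q) :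
    MonotoneOn (fun w ↦ p * w - q / w) (Ioi 0) := fun _ ha _ _ hab ↦
  sub_le_sub (mul_le_mul_of_nonneg_left hab hp) (div_le_div_of_nonneg_left hq ha hab)

lemma image_mul_sub_div_Ioi (hp : 0 < p) (hq : 0 < q) :
    (fun w ↦ p * w - q / w) '' Ioi 0 = univ := by
  refine eq_univ_of_forall fun y ↦ ?_
  set z := √(y ^ 2 + 4 * p * q)
  have hsq : z ^ 2 = y ^ 2 + 4 * p * q := sq_sqrt (by positivity)
  have hnum : 0 < y + z := by
    have hlt : -y < z := lt_sqrt_of_sq_lt (by nlinarith [mul_pos hp hq])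
    linarith
  have hne := hnum.ne'
  refine ⟨(y + z) / (2 * p), div_pos hnum (by positivity), ?_⟩
  field_simp
  linear_combination hsq

lemma integrableOn_add_div_sq_smul_comp {g : ℝ → E} (hg : Integrable g)
    (hp : 0 < p) (hq : 0 < q) :
    IntegrableOn (fun w ↦ (p + q / w ^ 2) • g (p * w - q / w)) (Ioi 0) :=
  (integrableOn_image_iff_integrableOn_deriv_smul_of_monotoneOn measurableSet_Ioi
    (fun _ hw ↦ (hasDerivAt_mul_sub_div p q hw.ne').hasDerivWithinAt)
    (monotoneOn_mul_sub_div hp.le hq.le) g).1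
    (by rwa [image_mul_sub_div_Ioi hp hq, integrableOn_univ])

lemma integral_Ioi_add_div_sq_smul_comp (g : ℝ → E) (hp : 0 < p) (hq : 0 < q) :
    ∫ w in Ioi 0, (p + q / w ^ 2) • g (p * w - q / w) = ∫ y, g y := by
  rw [← setIntegral_univ (f := g), ← image_mul_sub_div_Ioi hp hq,
    integral_image_eq_integral_deriv_smul_of_monotoneOn measurableSet_Ioi
      (fun _ hw ↦ (hasDerivAt_mul_sub_div p q hw.ne').hasDerivWithinAt)
      (monotoneOn_mul_sub_div hp.le hq.le)]

lemma integrableOn_comp_mul_sub_div {g : ℝ → E} (hg : Integrable g) (hp : 0 < p) (hq : 0 < q) :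
    IntegrableOn (fun w ↦ g (p * w - q / w)) (Ioi 0) := by
  have hbound : ∀ w : ℝ, ‖(p + q / w ^ 2)⁻¹‖ ≤ p⁻¹ := fun w ↦ by
    rw [norm_of_nonneg (by positivity)]
    exact inv_anti₀ hp (le_add_of_nonneg_right (by positivity))
  have hmeas : Measurable fun w : ℝ ↦ (p + q / w ^ 2)⁻¹ := by fun_prop
  have hint := (integrableOn_add_div_sq_smul_comp hg hp hq).integrable.bdd_smul
    p⁻¹ hmeas.aestronglyMeasurable (ae_of_all _ hbound)
  refine hint.congr (ae_of_all _ fun w ↦ ?_)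
  exact inv_smul_smul₀ (by positivity) _

-- The inversion `w ↦ q / (p * w)` negates `p * w - q / w` and swaps the two parts `p` and
-- `q / w ^ 2` of its derivative, so each contributes half of `∫ y, g y`.
theorem integral_Ioi_comp_mul_sub_div_of_even {g : ℝ → E} (hg : Integrable g)
    (heven : ∀ y, g (-y) = g y) (hp : 0 < p) (hq : 0 < q) :
    (2 * p) • ∫ w in Ioi 0, g (p * w - q / w) = ∫ y, g y := by
  have hint := integrableOn_comp_mul_sub_div hg hp hq
  have hinv : ∫ w in Ioi 0, (q / w ^ 2) • g (p * w - q / w) =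
      p • ∫ w in Ioi 0, g (p * w - q / w) := by
    rw [← integral_Ioi_comp_const_div _ (div_pos hq hp), ← integral_smul]
    refine setIntegral_congr_fun measurableSet_Ioi fun w (hw : 0 < w) ↦ ?_
    have hneg : p * (q / p / w) - q / (q / p / w) = -(p * w - q / w) := by field_simp; ring
    simp only [hneg, heven, smul_smul]
    congr 1
    field_simp
  have hsplit : ∫ w in Ioi 0, (q / w ^ 2) • g (p * w - q / w) =
      (∫ y, g y) - p • ∫ w in Ioi 0, g (p * w - q / w) := by
    rw [← integral_Ioi_add_div_sq_smul_comp g hp hq, ← integral_smul,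
      ← integral_sub (integrableOn_add_div_sq_smul_comp hg hp hq) (hint.fun_smul p)]
    simp only [add_smul, add_sub_cancel_left]
  rw [two_mul, add_smul, ← eq_sub_iff_add_eq, ← hsplit, hinv]

end CauchySchlomilch

lemma integral_Ioi_sq_div_quartic {p q b : ℝ} (hp : 0 < p) (hq : 0 < q)
    (hb : 0 < b + 2 * p * q) :
    ∫ w in Ioi (0 : ℝ), w ^ 2 / (p ^ 2 * w ^ 4 + b * w ^ 2 + q ^ 2) =
      π / (2 * p * √(b + 2 * p * q)) := by
  set k := √(b + 2 * p * q) with hk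
  have hk0 : 0 < k := sqrt_pos.2 hb
  have hb_eq : b = k ^ 2 - 2 * p * q := by rw [hk, sq_sqrt hb.le]; ring
  have hcomplete : ∀ w ∈ Ioi (0 : ℝ), w ^ 2 / (p ^ 2 * w ^ 4 + b * w ^ 2 + q ^ 2) =
      (k ^ 2)⁻¹ * (1 + (p / k * w - q / k / w) ^ 2)⁻¹ := fun w (hw : 0 < w) ↦ by
    have hden : p ^ 2 * w ^ 4 + b * w ^ 2 + q ^ 2 =
        k ^ 2 * w ^ 2 * (1 + (p / k * w - q / k / w) ^ 2) := by rw [hb_eq]; field_simp; ring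
    rw [hden]
    field_simp
  have hschlomilch : 2 * (p / k) * ∫ w in Ioi 0, (1 + (p / k * w - q / k / w) ^ 2)⁻¹ = π := by
    rw [← integral_univ_inv_one_add_sq]
    exact integral_Ioi_comp_mul_sub_div_of_even integrable_inv_one_add_sq
      (fun y ↦ by rw [neg_sq]) (div_pos hp hk0) (div_pos hq hk0)
  rw [setIntegral_congr_fun measurableSet_Ioi hcomplete, integral_const_mul, ← hschlomilch]
  field_simp

lemma integral_div_one_add_sq_mul (a h : ℝ) :
    ∫ t in 0..a, h / (1 + (t * h) ^ 2) = arctan (a * h) := by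
  have hscale := intervalIntegral.mul_integral_comp_mul_right (a := 0) (b := a) (c := h)
    (f := fun t : ℝ ↦ 1 / (1 + t ^ 2))
  rw [zero_mul, integral_one_div_one_add_sq, arctan_zero, sub_zero,
    ← intervalIntegral.integral_const_mul] at hscale
  simpa only [mul_one_div] using hscale

lemma two_mul_arctan_eq_arccos {x : ℝ} (hx : 0 ≤ x) :
    2 * arctan x = arccos ((1 - x ^ 2) / (1 + x ^ 2)) := by
  have hcos : cos (2 * arctan x) = (1 - x ^ 2) / (1 + x ^ 2) := by
    rw [cos_two_mul, cos_sq_arctan]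
    field_simp
    ring
  rw [← hcos, arccos_cos (by positivity) (by linarith [arctan_lt_pi_div_two x])]

namespace TangentDisks

variable {ρ : ℝ}

/-- The second coordinate of a point on the edge arc of the unit disk centred at `(0, -1, 0)` in the
plane `z = 0`, for the convex hull with the disk of radius `ρ` centred at `(0, ρ, 0)` in the plane
`x = 0`. The parameter `w` is chosen so that the tangent of the half exterior dihedral angle is
`(w / ρ) * √(-v * (2 + v))` at `v = arcCoord ρ w`. -/
noncomputable def arcCoord (ρ w : ℝ) : ℝ := -2 + 2 * (1 + ρ) / (w ^ 2 + 1 + 2 * ρ)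

/-- The integrand of the double integral over `t` and `w`; its `t`-integral over `[0, a]` is the
arclength element in `w` times `arctan (a * w * √(-v * (2 + v)))`, where `v = arcCoord ρ w`. -/
noncomputable def kernel (ρ t w : ℝ) : ℝ :=
  4 * (1 + ρ) * w ^ 2 /
    ((w ^ 2 + 1 + 2 * ρ) ^ 2 + 4 * (1 + ρ) * t ^ 2 * w ^ 2 * (w ^ 2 + ρ))

/-- The coefficient `p` when the denominator of `kernel ρ t w` is written as
`p ^ 2 * w ^ 4 + b * w ^ 2 + q ^ 2`, with `q = 1 + 2 * ρ`. -/
noncomputable def leadRoot (ρ t : ℝ) : ℝ := √(1 + 4 * (1 + ρ) * t ^ 2)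

/-- The quantity `√(b + 2 * p * q)` for the denominator `p ^ 2 * w ^ 4 + b * w ^ 2 + q ^ 2` of
`kernel ρ t w`, with the radicand factored in terms of `p = leadRoot ρ t`. -/
noncomputable def midRoot (ρ t : ℝ) : ℝ :=
  √((leadRoot ρ t + 1) * (ρ * leadRoot ρ t + 3 * ρ + 2))

lemma hasDerivAt_arcCoord (hρ : 0 ≤ ρ) (w : ℝ) :
    HasDerivAt (arcCoord ρ) (-(4 * (1 + ρ) * w / (w ^ 2 + 1 + 2 * ρ) ^ 2)) w := by
  have hden : HasDerivAt (fun w ↦ w ^ 2 + 1 + 2 * ρ) (2 * w) w := by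
    simpa using ((hasDerivAt_pow 2 w).add_const 1).add_const (2 * ρ)
  refine (((hden.fun_inv (by positivity)).const_mul (2 * (1 + ρ))).const_add (-2)).congr_deriv ?_
  ring

lemma antitoneOn_arcCoord (hρ : 0 ≤ ρ) : AntitoneOn (arcCoord ρ) (Ioi 0) := by
  intro w (hw : 0 < w) w' _ hww'
  unfold arcCoord
  gcongr

lemma image_arcCoord_Ioi (hρ : 0 ≤ ρ) :
    arcCoord ρ '' Ioi 0 = Ioo (-2) (-(2 * ρ) / (1 + 2 * ρ)) := by
  ext v
  constructor
  · rintro ⟨w, hw : 0 < w, rfl⟩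
    unfold arcCoord
    refine ⟨lt_add_of_pos_right _ (by positivity), ?_⟩
    have hlt : 2 * (1 + ρ) / (w ^ 2 + 1 + 2 * ρ) < 2 * (1 + ρ) / (1 + 2 * ρ) := by
      gcongr
      nlinarith
    calc -2 + 2 * (1 + ρ) / (w ^ 2 + 1 + 2 * ρ) < -2 + 2 * (1 + ρ) / (1 + 2 * ρ) := by gcongr
      _ = -(2 * ρ) / (1 + 2 * ρ) := by field_simp; ring
  · rintro ⟨hv₁, hv₂⟩
    rw [lt_div_iff₀ (by positivity)] at hv₂
    have hv : 0 < v + 2 := by linarith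
    have hsq : 0 < 2 * (1 + ρ) / (v + 2) - (1 + 2 * ρ) := by
      rw [sub_pos, lt_div_iff₀ hv]
      linarith
    refine ⟨√(2 * (1 + ρ) / (v + 2) - (1 + 2 * ρ)), sqrt_pos.2 hsq, ?_⟩
    rw [arcCoord, sq_sqrt hsq.le, add_assoc, sub_add_cancel, div_div_cancel₀ (by positivity)]
    ring

lemma neg_two_le_neg_two_mul_div (hρ : 0 ≤ ρ) : -2 ≤ -(2 * ρ) / (1 + 2 * ρ) := by
  rw [le_div_iff₀ (by positivity)]
  linarith

lemma integral_comp_arcCoord (hρ : 0 ≤ ρ) (g : ℝ → ℝ) :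
    ∫ v in (-2)..(-(2 * ρ) / (1 + 2 * ρ)), g v =
      ∫ w in Ioi 0, 4 * (1 + ρ) * w / (w ^ 2 + 1 + 2 * ρ) ^ 2 * g (arcCoord ρ w) := by
  rw [intervalIntegral.integral_of_le (neg_two_le_neg_two_mul_div hρ),
    integral_Ioc_eq_integral_Ioo, ← image_arcCoord_Ioi hρ,
    integral_image_eq_integral_deriv_smul_of_antitoneOn measurableSet_Ioi
      (fun w _ ↦ (hasDerivAt_arcCoord hρ w).hasDerivWithinAt) (antitoneOn_arcCoord hρ)]
  simp only [neg_neg, smul_eq_mul]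

lemma neg_arcCoord_mul_two_add (hρ : 0 ≤ ρ) (w : ℝ) :
    -arcCoord ρ w * (2 + arcCoord ρ w) =
      4 * (1 + ρ) * (w ^ 2 + ρ) / (w ^ 2 + 1 + 2 * ρ) ^ 2 := by
  unfold arcCoord
  field_simp
  ring

lemma tan_sq_arcCoord (hρ : 0 ≤ ρ) (w : ℝ) :
    2 * ρ * arcCoord ρ w + (1 + 2 * ρ) * arcCoord ρ w ^ 2 =
      w ^ 2 * (-arcCoord ρ w * (2 + arcCoord ρ w)) := by
  unfold arcCoord
  field_simp
  ring

lemma integral_kernel_left (hρ : 0 ≤ ρ) (a : ℝ) {w : ℝ} (hw : 0 < w) :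
    ∫ t in 0..a, kernel ρ t w =
      4 * (1 + ρ) * w / (w ^ 2 + 1 + 2 * ρ) ^ 2 *
        (1 / √(-arcCoord ρ w * (2 + arcCoord ρ w)) *
          arctan (a * √(2 * ρ * arcCoord ρ w + (1 + 2 * ρ) * arcCoord ρ w ^ 2))) := by
  set s := √(-arcCoord ρ w * (2 + arcCoord ρ w)) with hs
  have hpos : 0 < -arcCoord ρ w * (2 + arcCoord ρ w) := by
    rw [neg_arcCoord_mul_two_add hρ]
    positivity
  have hs0 : 0 < s := sqrt_pos.2 hpos
  have hs2 : s ^ 2 = 4 * (1 + ρ) * (w ^ 2 + ρ) / (w ^ 2 + 1 + 2 * ρ) ^ 2 := by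
    rw [hs, sq_sqrt hpos.le, neg_arcCoord_mul_two_add hρ]
  rw [tan_sq_arcCoord hρ, sqrt_mul (sq_nonneg w), sqrt_sq hw.le, ← hs,
    ← integral_div_one_add_sq_mul, ← intervalIntegral.integral_const_mul,
    ← intervalIntegral.integral_const_mul]
  refine intervalIntegral.integral_congr fun t _ ↦ ?_
  simp only [mul_pow, hs2, kernel]
  field_simp

lemma integrable_kernel (hρ : 0 ≤ ρ) (a : ℝ) :
    Integrable (Function.uncurry (kernel ρ))
      ((volume.restrict (uIoc 0 a)).prod (volume.restrict (Ioi 0))) := by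
  have hbound : IntegrableOn (fun w : ℝ ↦ 4 * (1 + ρ) * (1 + w ^ 2)⁻¹) (Ioi 0) :=
    (integrable_inv_one_add_sq.const_mul _).integrableOn
  have : IsFiniteMeasure (volume.restrict (uIoc 0 a)) :=
    isFiniteMeasure_restrict_Ioc _ _
  refine (hbound.comp_snd (volume.restrict (uIoc 0 a))).mono' ?_ (ae_of_all _ ?_)
  · refine Measurable.aestronglyMeasurable ?_
    unfold kernel Function.uncurry
    fun_prop
  · rintro ⟨t, w⟩
    have hcross : 0 ≤ t ^ 2 * w ^ 2 * (w ^ 2 + ρ) := by positivity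
    have hnonneg : 0 ≤ kernel ρ t w := by unfold kernel; positivity
    rw [Function.uncurry_apply_pair, norm_of_nonneg hnonneg, kernel, mul_div_assoc, ← one_div]
    refine mul_le_mul_of_nonneg_left ?_ (by positivity)
    rw [div_le_div_iff₀ (by positivity) (by positivity)]
    nlinarith [sq_nonneg w]

lemma leadRoot_sq (hρ : 0 ≤ ρ) (t : ℝ) : leadRoot ρ t ^ 2 = 1 + 4 * (1 + ρ) * t ^ 2 :=
  sq_sqrt (by positivity)

lemma leadRoot_pos (hρ : 0 ≤ ρ) (t : ℝ) : 0 < leadRoot ρ t := sqrt_pos.2 (by positivity)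

lemma midRoot_sq (hρ : 0 ≤ ρ) (t : ℝ) :
    midRoot ρ t ^ 2 = (leadRoot ρ t + 1) * (ρ * leadRoot ρ t + 3 * ρ + 2) :=
  sq_sqrt (by have hR := leadRoot_pos hρ t; positivity)

lemma midRoot_pos (hρ : 0 ≤ ρ) (t : ℝ) : 0 < midRoot ρ t :=
  sqrt_pos.2 (by have hR := leadRoot_pos hρ t; positivity)

lemma integral_kernel_right (hρ : 0 ≤ ρ) (t : ℝ) :
    ∫ w in Ioi 0, kernel ρ t w = π * (2 * (1 + ρ) / (leadRoot ρ t * midRoot ρ t)) := by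
  have hR := leadRoot_pos hρ t
  have hR2 := leadRoot_sq hρ t
  set b := 2 * (1 + 2 * ρ) + 4 * (1 + ρ) * t ^ 2 * ρ
  have hdiscr : b + 2 * leadRoot ρ t * (1 + 2 * ρ) =
      (leadRoot ρ t + 1) * (ρ * leadRoot ρ t + 3 * ρ + 2) := by
    linear_combination -ρ * hR2
  have hquartic : ∀ w, kernel ρ t w = 4 * (1 + ρ) *
      (w ^ 2 / (leadRoot ρ t ^ 2 * w ^ 4 + b * w ^ 2 + (1 + 2 * ρ) ^ 2)) := fun w ↦ by
    rw [hR2, kernel, mul_div_assoc]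
    congr 2
    ring
  simp only [hquartic]
  rw [integral_const_mul, integral_Ioi_sq_div_quartic hR (by positivity) (by positivity), hdiscr,
    ← midRoot]
  have hS := midRoot_pos hρ t
  field_simp
  ring

lemma hasDerivAt_leadRoot (hρ : 0 ≤ ρ) (t : ℝ) :
    HasDerivAt (leadRoot ρ) (4 * (1 + ρ) * t / leadRoot ρ t) t := by
  have hR := leadRoot_pos hρ t
  have hsqrt := (((hasDerivAt_pow 2 t).const_mul (4 * (1 + ρ))).const_add 1).sqrt (by positivity)
  refine hsqrt.congr_deriv ?_
  rw [← leadRoot]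
  field_simp
  norm_num

lemma hasDerivAt_midRoot (hρ : 0 ≤ ρ) (t : ℝ) :
    HasDerivAt (midRoot ρ) (4 * (1 + ρ) * t * (ρ * leadRoot ρ t + 2 * ρ + 1) /
      (leadRoot ρ t * midRoot ρ t)) t := by
  have hR := leadRoot_pos hρ t
  have hS := midRoot_pos hρ t
  have hR' := hasDerivAt_leadRoot hρ t
  have hsqrt := ((hR'.add_const 1).mul (((hR'.const_mul ρ).add_const (3 * ρ)).add_const 2)).sqrt
    (sqrt_pos.1 hS).ne'
  refine hsqrt.congr_deriv ?_
  simp only [Pi.mul_apply]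
  rw [← midRoot]
  field_simp
  ring

lemma hasDerivAt_arctan_div_midRoot (hρ : 0 ≤ ρ) (t : ℝ) :
    HasDerivAt (fun t ↦ arctan (2 * (1 + ρ) * t / midRoot ρ t))
      (2 * (1 + ρ) / (leadRoot ρ t * midRoot ρ t)) t := by
  have hR := leadRoot_pos hρ t
  have hS := midRoot_pos hρ t
  have hR2 := leadRoot_sq hρ t
  have hS2 := midRoot_sq hρ t
  have hone : 1 + (2 * (1 + ρ) * t / midRoot ρ t) ^ 2 =
      (1 + 2 * ρ) * (leadRoot ρ t + 1) ^ 2 / midRoot ρ t ^ 2 := by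
    field_simp
    linear_combination hS2 - (1 + ρ) * hR2
  have hnum : midRoot ρ t - t * (4 * (1 + ρ) * t * (ρ * leadRoot ρ t + 2 * ρ + 1) /
      (leadRoot ρ t * midRoot ρ t)) =
      (1 + 2 * ρ) * (leadRoot ρ t + 1) ^ 2 / (leadRoot ρ t * midRoot ρ t) := by
    field_simp
    linear_combination leadRoot ρ t * hS2 + (ρ * leadRoot ρ t + 2 * ρ + 1) * hR2
  refine ((((hasDerivAt_id t).const_mul (2 * (1 + ρ))).fun_div (hasDerivAt_midRoot hρ t)
    hS.ne').arctan).congr_deriv ?_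
  simp only [id_eq, mul_one, mul_assoc, ← mul_sub] at hone hnum ⊢
  rw [hone, hnum]
  field_simp

lemma integral_inv_leadRoot_mul_midRoot (hρ : 0 ≤ ρ) (a : ℝ) :
    ∫ t in 0..a, 2 * (1 + ρ) / (leadRoot ρ t * midRoot ρ t) =
      arctan (2 * (1 + ρ) * a / midRoot ρ a) := by
  have hcont : Continuous fun t ↦ 2 * (1 + ρ) / (leadRoot ρ t * midRoot ρ t) := by
    refine continuous_const.div (by unfold midRoot leadRoot; fun_prop) fun t ↦ ?_
    exact (mul_pos (leadRoot_pos hρ t) (midRoot_pos hρ t)).ne'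
  rw [intervalIntegral.integral_eq_sub_of_hasDerivAt
    (fun t _ ↦ hasDerivAt_arctan_div_midRoot hρ t) (hcont.intervalIntegrable 0 a)]
  simp only [mul_zero, zero_div, arctan_zero, sub_zero]

theorem integral_arctan_mul_tan (hρ : 0 ≤ ρ) (a : ℝ) :
    ∫ v in (-2)..(-(2 * ρ) / (1 + 2 * ρ)),
        1 / √(-v * (2 + v)) * arctan (a * √(2 * ρ * v + (1 + 2 * ρ) * v ^ 2)) =
      π * arctan (2 * (1 + ρ) * a / midRoot ρ a) := by
  rw [integral_comp_arcCoord hρ, ← integral_inv_leadRoot_mul_midRoot hρ,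
    ← intervalIntegral.integral_const_mul]
  simp only [← integral_kernel_right hρ]
  rw [intervalIntegral_integral_swap (integrable_kernel hρ a)]
  exact setIntegral_congr_fun measurableSet_Ioi fun w hw ↦ (integral_kernel_left hρ a hw).symm

lemma leadRoot_one_div (hρ : 0 < ρ) : leadRoot ρ (1 / ρ) = (ρ + 2) / ρ := by
  have hsq : 1 + 4 * (1 + ρ) * (1 / ρ) ^ 2 = ((ρ + 2) / ρ) ^ 2 := by
    field_simp
    ring
  rw [leadRoot, hsq, sqrt_sq (by positivity)]

lemma midRoot_one_div_sq (hρ : 0 < ρ) : midRoot ρ (1 / ρ) ^ 2 = 8 * (1 + ρ) ^ 2 / ρ := by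
  rw [midRoot_sq hρ.le, leadRoot_one_div hρ]
  field_simp
  ring

lemma two_mul_arctan_div_midRoot_one_div (hρ : 0 < ρ) :
    2 * arctan (2 * (1 + ρ) * (1 / ρ) / midRoot ρ (1 / ρ)) =
      arccos ((2 * ρ - 1) / (2 * ρ + 1)) := by
  have hS := midRoot_pos hρ.le (1 / ρ)
  have hsq : (2 * (1 + ρ) * (1 / ρ) / midRoot ρ (1 / ρ)) ^ 2 = 1 / (2 * ρ) := by
    rw [div_pow, midRoot_one_div_sq hρ]
    field_simp
    norm_num
  rw [two_mul_arctan_eq_arccos (by positivity), hsq]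
  congr 1
  field_simp

end TangentDisks

-- Along the unit circle, `(2 * ρ * v + (1 + 2 * ρ) * v ^ 2) / ρ ^ 2` is the squared tangent of
-- the half exterior dihedral angle of the convex hull with the touching perpendicular disk.
theorem dihedral_angle_integral_example_three_general {ρ : ℝ} (hρ : 0 < ρ) :
    (∫ v in (-2 : ℝ)..(-(2 * ρ) / (1 + 2 * ρ)),
        (1 / √(-v * (2 + v))) *
          arccos (1 / √(1 + (2 * ρ * v + (1 + 2 * ρ) * v ^ 2) / ρ ^ 2))) =
      π / 2 * arccos ((2 * ρ - 1) / (2 * ρ + 1)) := by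
  have hintegrand : ∀ v ∈ uIcc (-2) (-(2 * ρ) / (1 + 2 * ρ)),
      1 / √(-v * (2 + v)) * arccos (1 / √(1 + (2 * ρ * v + (1 + 2 * ρ) * v ^ 2) / ρ ^ 2)) =
        1 / √(-v * (2 + v)) * arctan (1 / ρ * √(2 * ρ * v + (1 + 2 * ρ) * v ^ 2)) := by
    intro v hv
    rw [uIcc_of_le (TangentDisks.neg_two_le_neg_two_mul_div hρ.le), mem_Icc,
      le_div_iff₀ (by positivity)] at hv
    have htan : 0 ≤ 2 * ρ * v + (1 + 2 * ρ) * v ^ 2 := by nlinarith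
    congr 1
    rw [arctan_eq_arccos (by positivity), mul_pow, sq_sqrt htan, one_div_pow,
      one_div_mul_eq_div, one_div]
  rw [intervalIntegral.integral_congr hintegrand, TangentDisks.integral_arctan_mul_tan hρ.le,
    ← TangentDisks.two_mul_arctan_div_midRoot_one_div hρ]
  ring

/-- ∫_{v=-2}^{-2/3} (1/√(−v(2+v))) · arccos(1/√(1 + 2v + 3v²)) dv
      = (π/2)·arccos(1/3). -/
theorem dihedral_angle_integral_example_three :
    (∫ v in (-2 : ℝ)..(-2/3),
        (1 / Real.sqrt (-v * (2 + v)))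
          * Real.arccos (1 / Real.sqrt (1 + 2 * v + 3 * v ^ 2))) =
      (Real.pi / 2) * Real.arccos (1 / 3) := by
  convert dihedral_angle_integral_example_three_general one_pos using 5 <;> norm_num [add_assoc]
end

section
/- One has ∫_{θ=0}^{π/2} ∫_{φ=0}^{π/2} max{ (1 − sin θ) sin φ, sin θ sin φ + √(sin²θ sin²φ + cos²φ) } · sin φ dφ dθ = (π/4) · ( √2 + arccos(1/3) ). -/
open Real

/-!
For a direction `(a, b, c)` of the first octant the two disks have support functions
`√(a² + b²) - b` and `√(b² + c²) + b`. The isometry `(a, b, c) ↦ (c, -b, a)` exchanges them and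
maps the first octant to its mirror image in `b = 0`. The integral of their maximum over the octant
is therefore the integral of `√(a² + b²) - b` over the directions with `a, c > 0` in which it is
the larger of the two.

The polar body of the convex hull of the disks is bounded by the parabolic cylinders
`a² = 1 + 2 * b` and `c² = 1 - 2 * b`, which meet over the circle `a² + c² = 2`. Normalizing the
points `(a, (a² - 1) / 2, c)`, where the first support function is `1`, thus parametrizes these
directions by the quarter of the disk of radius `√2`.

In polar coordinates the radial integral is elementary and leaves, up to trigonometric terms, the
integrals over `t` of `1 / sin t` and `sin t` times `log (1 + 2 * (1 + s) ^ 2)` minus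
`log (1 + 2 * (1 - s) ^ 2)`, with `s = sin t`. These are real parts of integrals with
`log (1 + sin z * s) - log (1 - sin z * s)` for a complex angle `z` with `sin z = (2 + √2 * I) / 3`.
The first one is `π * z`, since its derivative in `z` is constant; the second is elementary by
parts. Finally `2 * re z = arccos (1 / 3)`.
-/

open MeasureTheory Set
open scoped ENNReal Interval

/-! ### Integration over the hemisphere -/

theorem ofReal_intervalIntegral_eq_lintegral {f : ℝ → ℝ} {a b : ℝ} (hab : a ≤ b)
    (hf : Continuous f) (hf₀ : ∀ x ∈ Ioo a b, 0 ≤ f x) :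
    ENNReal.ofReal (∫ x in a..b, f x) = ∫⁻ x in Ioo a b, ENNReal.ofReal (f x) := by
  rw [intervalIntegral.integral_of_le hab, integral_Ioc_eq_integral_Ioo]
  refine ofReal_integral_eq_lintegral_ofReal ?_ (ae_restrict_of_forall_mem measurableSet_Ioo hf₀)
  exact (hf.integrableOn_Icc (a := a) (b := b)).mono_set Ioo_subset_Icc_self

theorem ofReal_intervalIntegral_intervalIntegral_eq_lintegral {f : ℝ → ℝ → ℝ} {a b c d : ℝ}
    (hab : a ≤ b) (hcd : c ≤ d) (hf : Continuous f.uncurry)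
    (hf₀ : ∀ x ∈ Ioo a b, ∀ y ∈ Ioo c d, 0 ≤ f x y) :
    ENNReal.ofReal (∫ x in a..b, ∫ y in c..d, f x y) =
      ∫⁻ x in Ioo a b, ∫⁻ y in Ioo c d, ENNReal.ofReal (f x y) := by
  have inner_eq : ∀ x ∈ Ioo a b, ENNReal.ofReal (∫ y in c..d, f x y) =
      ∫⁻ y in Ioo c d, ENNReal.ofReal (f x y) := fun x hx ↦
    ofReal_intervalIntegral_eq_lintegral hcd (hf.comp (Continuous.prodMk_right x)) (hf₀ x hx)
  rw [ofReal_intervalIntegral_eq_lintegral hab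
    (intervalIntegral.continuous_parametric_intervalIntegral_of_continuous' hf _ _),
    setLIntegral_congr_fun measurableSet_Ioo inner_eq]
  intro x hx
  rw [intervalIntegral.integral_of_le hcd, integral_Ioc_eq_integral_Ioo]
  exact setIntegral_nonneg measurableSet_Ioo (hf₀ x hx)

/-- The unit vector with longitude `θ` and colatitude `φ`. -/
noncomputable def sphericalDirection (θ φ : ℝ) : ℝ × ℝ × ℝ :=
  (cos θ * sin φ, sin θ * sin φ, cos φ)

/-- The integral of `F`, for the surface measure, over the part of the upper unit hemisphere
with longitudes in `I`. -/
noncomputable def hemisphereLIntegral (I : Set ℝ) (F : ℝ × ℝ × ℝ → ℝ≥0∞) : ℝ≥0∞ :=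
  ∫⁻ θ in I, ∫⁻ φ in Ioo 0 (π / 2), ENNReal.ofReal (sin φ) * F (sphericalDirection θ φ)

theorem image_pi_div_two_sub_arctan_div {r : ℝ} (hr : 0 < r) :
    (fun c ↦ π / 2 - arctan (c / r)) '' Ioi 0 = Ioo 0 (π / 2) := by
  ext φ
  constructor
  · rintro ⟨c, hc, rfl⟩
    have := arctan_lt_pi_div_two (c / r)
    have := arctan_pos.2 (div_pos hc hr)
    constructor <;> linarith
  · rintro ⟨hφ₀, hφ⟩
    refine ⟨r * tan (π / 2 - φ), mul_pos hr (tan_pos_of_pos_of_lt_pi_div_two ?_ ?_), ?_⟩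
    · linarith
    · linarith
    · dsimp only
      rw [mul_div_cancel_left₀ _ hr.ne', arctan_tan] <;> linarith

theorem lintegral_Ioo_zero_pi_div_two_eq_lintegral_arctan {r : ℝ} (hr : 0 < r) (g : ℝ → ℝ≥0∞) :
    ∫⁻ φ in Ioo 0 (π / 2), g φ =
      ∫⁻ c in Ioi 0, ENNReal.ofReal (r / (r ^ 2 + c ^ 2)) * g (π / 2 - arctan (c / r)) := by
  rw [← image_pi_div_two_sub_arctan_div hr,
    lintegral_image_eq_lintegral_deriv_mul_of_antitoneOn measurableSet_Ioi (f' := fun c ↦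
      -(r / (r ^ 2 + c ^ 2)))]
  · simp only [neg_neg]
  · intro c _
    have := (((hasDerivAt_id c).div_const r).arctan.const_sub (π / 2)).hasDerivWithinAt
      (s := Ioi 0)
    convert! this using 1
    rw [id_eq]
    field_simp
  · intro c _ c' _ hcc'
    have := arctan_strictMono.monotone (div_le_div_of_nonneg_right hcc' hr.le)
    dsimp only
    linarith

theorem sin_pi_div_two_sub_arctan_div {r : ℝ} (hr : 0 < r) (c : ℝ) :
    sin (π / 2 - arctan (c / r)) = r / √(r ^ 2 + c ^ 2) := by
  have : r ^ 2 + c ^ 2 = r ^ 2 * (1 + (c / r) ^ 2) := by field_simp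
  rw [sin_pi_div_two_sub, cos_arctan, this, sqrt_mul (sq_nonneg r), sqrt_sq hr.le]
  field_simp

theorem cos_pi_div_two_sub_arctan_div {r : ℝ} (hr : 0 < r) (c : ℝ) :
    cos (π / 2 - arctan (c / r)) = c / √(r ^ 2 + c ^ 2) := by
  have : r ^ 2 + c ^ 2 = r ^ 2 * (1 + (c / r) ^ 2) := by field_simp
  rw [cos_pi_div_two_sub, sin_arctan, this, sqrt_mul (sq_nonneg r), sqrt_sq hr.le]
  field_simp

theorem sphericalDirection_pi_div_two_sub_arctan_div {r : ℝ} (hr : 0 < r) (θ c : ℝ) :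
    sphericalDirection θ (π / 2 - arctan (c / r)) =
      (√(r ^ 2 + c ^ 2))⁻¹ • (r * cos θ, r * sin θ, c) := by
  simp only [sphericalDirection, sin_pi_div_two_sub_arctan_div hr,
    cos_pi_div_two_sub_arctan_div hr, Prod.smul_mk, smul_eq_mul, Prod.mk.injEq]
  refine ⟨?_, ?_, ?_⟩ <;> ring

theorem lintegral_meridian_eq {r : ℝ} (hr : 0 < r) (θ : ℝ) (F : ℝ × ℝ × ℝ → ℝ≥0∞) :
    ∫⁻ φ in Ioo 0 (π / 2), ENNReal.ofReal (sin φ) * F (sphericalDirection θ φ) =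
      ∫⁻ c in Ioi 0, ENNReal.ofReal (r ^ 2 / √(r ^ 2 + c ^ 2) ^ 3) *
        F ((√(r ^ 2 + c ^ 2))⁻¹ • (r * cos θ, r * sin θ, c)) := by
  rw [lintegral_Ioo_zero_pi_div_two_eq_lintegral_arctan hr]
  refine lintegral_congr fun c ↦ ?_
  have hN : 0 < r ^ 2 + c ^ 2 := by positivity
  have jacobian : r ^ 2 / √(r ^ 2 + c ^ 2) ^ 3 =
      r / (r ^ 2 + c ^ 2) * (r / √(r ^ 2 + c ^ 2)) := by
    rw [div_mul_div_comm, ← sq, pow_succ √_, sq_sqrt hN.le]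
  rw [sphericalDirection_pi_div_two_sub_arctan_div hr, sin_pi_div_two_sub_arctan_div hr,
    jacobian, ENNReal.ofReal_mul (by positivity), mul_assoc]

theorem hemisphereLIntegral_octant_eq_gnomonic (F : ℝ × ℝ × ℝ → ℝ≥0∞) :
    hemisphereLIntegral (Ioo 0 (π / 2)) F = ∫⁻ x in Ioi 0, ∫⁻ z in Ioi 0,
      ENNReal.ofReal (1 / √(1 + x ^ 2 + z ^ 2) ^ 3) * F ((√(1 + x ^ 2 + z ^ 2))⁻¹ • (x, 1, z)) := by
  rw [hemisphereLIntegral, lintegral_Ioo_zero_pi_div_two_eq_lintegral_arctan one_pos]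
  refine setLIntegral_congr_fun measurableSet_Ioi fun x _ ↦ ?_
  have hr : 0 < √(1 ^ 2 + x ^ 2) := by positivity
  have hr₂ : √(1 ^ 2 + x ^ 2) ^ 2 = 1 + x ^ 2 := by rw [sq_sqrt (by positivity), one_pow]
  rw [lintegral_meridian_eq hr, ← lintegral_const_mul' _ _ ENNReal.ofReal_ne_top]
  refine lintegral_congr fun z ↦ ?_
  rw [sin_pi_div_two_sub_arctan_div one_pos, cos_pi_div_two_sub_arctan_div one_pos,
    mul_div_cancel₀ _ hr.ne', mul_div_cancel₀ _ hr.ne', hr₂, ← mul_assoc,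
    ← ENNReal.ofReal_mul (by positivity), one_pow, div_mul_div_cancel₀ (by positivity)]

theorem hemisphereLIntegral_octant_comp_swap {F : ℝ × ℝ × ℝ → ℝ≥0∞} (hF : Measurable F) :
    hemisphereLIntegral (Ioo 0 (π / 2)) (fun u ↦ F (u.2.2, u.2.1, u.1)) =
      hemisphereLIntegral (Ioo 0 (π / 2)) F := by
  rw [hemisphereLIntegral_octant_eq_gnomonic, hemisphereLIntegral_octant_eq_gnomonic,
    lintegral_lintegral_swap]
  · simp only [Prod.smul_mk, add_right_comm]
  · exact Measurable.aemeasurable (by fun_prop)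

theorem lintegral_Ioo_add_lintegral_comp_neg {g : ℝ → ℝ≥0∞} {b : ℝ} (hb : 0 < b) :
    (∫⁻ θ in Ioo 0 b, g θ) + ∫⁻ θ in Ioo 0 b, g (-θ) = ∫⁻ θ in Ioo (-b) b, g θ := by
  have reflect : ∫⁻ θ in Ioo 0 b, g (-θ) = ∫⁻ θ in Ioo (-b) 0, g θ := by
    have := (Measure.measurePreserving_neg (volume : Measure ℝ)).setLIntegral_comp_emb
      (MeasurableEquiv.neg ℝ).measurableEmbedding g (Ioo 0 b)
    simpa using this
  rw [reflect, ← Ioo_union_Ico_eq_Ioo (neg_lt_zero.2 hb) hb.le,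
    lintegral_union measurableSet_Ico (by grind), add_comm,
    setLIntegral_congr (Ioo_ae_eq_Ico (a := (0 : ℝ)) (b := b))]

theorem hemisphereLIntegral_Ioo_add_comp_neg {b : ℝ} (hb : 0 < b) (F : ℝ × ℝ × ℝ → ℝ≥0∞) :
    hemisphereLIntegral (Ioo 0 b) F +
      hemisphereLIntegral (Ioo 0 b) (fun u ↦ F (u.1, -u.2.1, u.2.2)) =
        hemisphereLIntegral (Ioo (-b) b) F := by
  simp only [hemisphereLIntegral, ← lintegral_Ioo_add_lintegral_comp_neg hb, sphericalDirection,
    cos_neg, sin_neg, neg_mul]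

theorem hemisphereLIntegral_add {F : ℝ × ℝ × ℝ → ℝ≥0∞} (hF : Measurable F) (I : Set ℝ)
    (G : ℝ × ℝ × ℝ → ℝ≥0∞) :
    hemisphereLIntegral I (fun u ↦ F u + G u) =
      hemisphereLIntegral I F + hemisphereLIntegral I G := by
  have hF' : Measurable fun p : ℝ × ℝ ↦
      ENNReal.ofReal (sin p.2) * F (sphericalDirection p.1 p.2) := by
    unfold sphericalDirection
    fun_prop
  simp only [hemisphereLIntegral, mul_add]
  rw [← lintegral_add_left hF'.lintegral_prod_right']
  exact lintegral_congr fun θ ↦ lintegral_add_left (hF'.comp measurable_prodMk_left) _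

/-! ### The two support functions -/

/-- The support function of the disk `{x² + (y + 1)² ≤ 1, z = 0}`. -/
noncomputable def xyDiskSupport (u : ℝ × ℝ × ℝ) : ℝ :=
  √(u.1 ^ 2 + u.2.1 ^ 2) - u.2.1

/-- The support function of the disk `{(y - 1)² + z² ≤ 1, x = 0}`. -/
noncomputable def yzDiskSupport (u : ℝ × ℝ × ℝ) : ℝ :=
  √(u.2.1 ^ 2 + u.2.2 ^ 2) + u.2.1

/-- The support function of the disk in the plane `z = 0`, cut off to the directions in which
the convex hull of the two disks is supported by this disk alone. -/
noncomputable def xyContactSupport : ℝ × ℝ × ℝ → ℝ≥0∞ :=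
  {u | yzDiskSupport u < xyDiskSupport u}.indicator fun u ↦ ENNReal.ofReal (xyDiskSupport u)

theorem measurable_xyDiskSupport : Measurable xyDiskSupport := by
  unfold xyDiskSupport
  fun_prop

theorem measurable_yzDiskSupport : Measurable yzDiskSupport := by
  unfold yzDiskSupport
  fun_prop

theorem measurable_xyContactSupport : Measurable xyContactSupport :=
  measurable_xyDiskSupport.ennreal_ofReal.indicator
    (measurableSet_lt measurable_yzDiskSupport measurable_xyDiskSupport)

theorem xyDiskSupport_sphericalDirection (θ : ℝ) {φ : ℝ} (hφ : 0 ≤ sin φ) :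
    xyDiskSupport (sphericalDirection θ φ) = (1 - sin θ) * sin φ := by
  have norm_eq : √((cos θ * sin φ) ^ 2 + (sin θ * sin φ) ^ 2) = sin φ := by
    rw [mul_pow, mul_pow, ← add_mul, cos_sq_add_sin_sq, one_mul, sqrt_sq hφ]
  simp only [xyDiskSupport, sphericalDirection, norm_eq]
  ring

theorem yzDiskSupport_sphericalDirection (θ φ : ℝ) :
    yzDiskSupport (sphericalDirection θ φ) =
      √(sin θ ^ 2 * sin φ ^ 2 + cos φ ^ 2) + sin θ * sin φ := by
  simp only [yzDiskSupport, sphericalDirection, mul_pow]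

theorem subsingleton_setOf_diskSupport_eq (θ : ℝ) :
    {φ ∈ Ioo 0 (π / 2) | xyDiskSupport (sphericalDirection θ φ) =
      yzDiskSupport (sphericalDirection θ φ)}.Subsingleton := by
  have sin_sq_eq : ∀ φ, xyDiskSupport (sphericalDirection θ φ) =
      yzDiskSupport (sphericalDirection θ φ) → 0 < sin φ →
      sin φ ^ 2 * (3 * sin θ ^ 2 - 4 * sin θ + 2) = 1 := by
    intro φ hφ hsin
    have hyz := sq_sqrt (add_nonneg (mul_nonneg (sq_nonneg (sin θ)) (sq_nonneg (sin φ)))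
      (sq_nonneg (cos φ)))
    rw [xyDiskSupport_sphericalDirection θ hsin.le, yzDiskSupport_sphericalDirection,
      ← sub_eq_iff_eq_add] at hφ
    rw [← hφ] at hyz
    linear_combination hyz + sin_sq_add_cos_sq φ
  have hpos : 0 < 3 * sin θ ^ 2 - 4 * sin θ + 2 := by nlinarith [sq_nonneg (3 * sin θ - 2)]
  rintro φ ⟨hφ, hφ_tie⟩ φ' ⟨hφ', hφ'_tie⟩
  have hsin : 0 < sin φ := sin_pos_of_mem_Ioo ⟨hφ.1, by linarith [hφ.2, pi_pos]⟩
  have hsin' : 0 < sin φ' := sin_pos_of_mem_Ioo ⟨hφ'.1, by linarith [hφ'.2, pi_pos]⟩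
  have hsq : sin φ ^ 2 = sin φ' ^ 2 := mul_right_cancel₀ hpos.ne'
    ((sin_sq_eq φ hφ_tie hsin).trans (sin_sq_eq φ' hφ'_tie hsin').symm)
  refine injOn_sin ?_ ?_ ((sq_eq_sq₀ hsin.le hsin'.le).1 hsq) <;> constructor <;>
    linarith [hφ.1, hφ.2, hφ'.1, hφ'.2]

theorem ofReal_max_diskSupport_eq_add {u : ℝ × ℝ × ℝ} (hu : xyDiskSupport u ≠ yzDiskSupport u) :
    ENNReal.ofReal (max (xyDiskSupport u) (yzDiskSupport u)) =
      xyContactSupport u + xyContactSupport (u.2.2, -u.2.1, u.1) := by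
  have hxy : xyDiskSupport (u.2.2, -u.2.1, u.1) = yzDiskSupport u := by
    simp [xyDiskSupport, yzDiskSupport, add_comm]
  have hyz : yzDiskSupport (u.2.2, -u.2.1, u.1) = xyDiskSupport u := by
    simp [xyDiskSupport, yzDiskSupport, add_comm, sub_eq_add_neg]
  rcases hu.lt_or_gt with h | h <;>
    simp [xyContactSupport, indicator, hxy, hyz, h, h.le, h.not_gt]

theorem hemisphereLIntegral_octant_max_eq :
    hemisphereLIntegral (Ioo 0 (π / 2))
        (fun u ↦ ENNReal.ofReal (max (xyDiskSupport u) (yzDiskSupport u))) =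
      hemisphereLIntegral (Ioo (-(π / 2)) (π / 2)) xyContactSupport := by
  have split : hemisphereLIntegral (Ioo 0 (π / 2))
      (fun u ↦ ENNReal.ofReal (max (xyDiskSupport u) (yzDiskSupport u))) =
      hemisphereLIntegral (Ioo 0 (π / 2))
        (fun u ↦ xyContactSupport u + xyContactSupport (u.2.2, -u.2.1, u.1)) := by
    refine lintegral_congr fun θ ↦ lintegral_congr_ae ?_
    filter_upwards [ae_restrict_mem measurableSet_Ioo, ae_restrict_of_ae
      (measure_eq_zero_iff_ae_notMem.1 ((subsingleton_setOf_diskSupport_eq θ).measure_zero volume))]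
      with φ hφ hφ_tie
    rw [ofReal_max_diskSupport_eq_add fun h ↦ hφ_tie ⟨hφ, h⟩]
  have hG : Measurable fun u : ℝ × ℝ × ℝ ↦ xyContactSupport (u.1, -u.2.1, u.2.2) :=
    measurable_xyContactSupport.comp (by fun_prop)
  rw [split, hemisphereLIntegral_add measurable_xyContactSupport,
    hemisphereLIntegral_octant_comp_swap hG,
    hemisphereLIntegral_Ioo_add_comp_neg pi_div_two_pos]

/-! ### The parabolic chart -/

theorem image_two_mul_arctan_sub_pi_div_two :
    (fun a ↦ 2 * arctan a - π / 2) '' Ioi 0 = Ioo (-(π / 2)) (π / 2) := by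
  ext θ
  constructor
  · rintro ⟨a, ha, rfl⟩
    have := arctan_lt_pi_div_two a
    have := arctan_pos.2 ha
    constructor <;> linarith
  · rintro ⟨hθ₀, hθ⟩
    refine ⟨tan ((θ + π / 2) / 2), tan_pos_of_pos_of_lt_pi_div_two ?_ ?_, ?_⟩
    · linarith
    · linarith
    · dsimp only
      rw [arctan_tan] <;> linarith

theorem lintegral_Ioo_neg_pi_div_two_pi_div_two_eq_lintegral_arctan (g : ℝ → ℝ≥0∞) :
    ∫⁻ θ in Ioo (-(π / 2)) (π / 2), g θ =
      ∫⁻ a in Ioi 0, ENNReal.ofReal (2 / (1 + a ^ 2)) * g (2 * arctan a - π / 2) := by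
  rw [← image_two_mul_arctan_sub_pi_div_two]
  refine lintegral_image_eq_lintegral_deriv_mul_of_monotoneOn measurableSet_Ioi
    (f' := fun a ↦ 2 / (1 + a ^ 2)) (fun a _ ↦ ?_) (fun a _ a' _ haa' ↦ ?_) g
  · rw [← mul_one_div 2]
    exact (((hasDerivAt_arctan a).const_mul 2).sub_const (π / 2)).hasDerivWithinAt
  · have := arctan_strictMono.monotone haa'
    linarith

theorem cos_two_mul_arctan_sub_pi_div_two (a : ℝ) :
    cos (2 * arctan a - π / 2) = 2 * a / (1 + a ^ 2) := by
  have := sq_sqrt (add_nonneg zero_le_one (sq_nonneg a))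
  rw [cos_sub_pi_div_two, sin_two_mul, sin_arctan, cos_arctan]
  field_simp
  linear_combination (-a) * this

theorem sin_two_mul_arctan_sub_pi_div_two (a : ℝ) :
    sin (2 * arctan a - π / 2) = (a ^ 2 - 1) / (1 + a ^ 2) := by
  rw [sin_sub_pi_div_two, cos_two_mul, cos_sq_arctan]
  field_simp
  ring

theorem xyDiskSupport_smul {k : ℝ} (hk : 0 ≤ k) (u : ℝ × ℝ × ℝ) :
    xyDiskSupport (k • u) = k * xyDiskSupport u := by
  simp only [xyDiskSupport, Prod.smul_fst, Prod.smul_snd, smul_eq_mul, mul_pow, ← mul_add,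
    sqrt_mul (sq_nonneg k), sqrt_sq hk, mul_sub]

theorem yzDiskSupport_smul {k : ℝ} (hk : 0 ≤ k) (u : ℝ × ℝ × ℝ) :
    yzDiskSupport (k • u) = k * yzDiskSupport u := by
  simp only [yzDiskSupport, Prod.smul_fst, Prod.smul_snd, smul_eq_mul, mul_pow, ← mul_add,
    sqrt_mul (sq_nonneg k), sqrt_sq hk]

theorem xyContactSupport_smul {k : ℝ} (hk : 0 < k) (u : ℝ × ℝ × ℝ) :
    xyContactSupport (k • u) = ENNReal.ofReal k * xyContactSupport u := by
  simp [xyContactSupport, indicator, xyDiskSupport_smul hk.le, yzDiskSupport_smul hk.le,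
    mul_lt_mul_iff_right₀ hk, ENNReal.ofReal_mul hk.le]

theorem xyDiskSupport_parabola (a c : ℝ) : xyDiskSupport (a, (a ^ 2 - 1) / 2, c) = 1 := by
  have : a ^ 2 + ((a ^ 2 - 1) / 2) ^ 2 = ((a ^ 2 + 1) / 2) ^ 2 := by ring
  simp only [xyDiskSupport, this]
  rw [sqrt_sq (by positivity)]
  ring

theorem yzDiskSupport_parabola_lt_one_iff (a c : ℝ) :
    yzDiskSupport (a, (a ^ 2 - 1) / 2, c) < 1 ↔ a ^ 2 + c ^ 2 < 2 := by
  have cancel : √(((a ^ 2 - 1) / 2) ^ 2 + c ^ 2) + (a ^ 2 - 1) / 2 < 1 ↔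
      √(((a ^ 2 - 1) / 2) ^ 2 + c ^ 2) < (3 - a ^ 2) / 2 := by
    constructor <;> intro h <;> linarith
  rw [yzDiskSupport, cancel]
  constructor
  · intro h
    have := (sqrt_lt' ((sqrt_nonneg _).trans_lt h)).1 h
    linarith
  · intro h
    rw [sqrt_lt' (by nlinarith [sq_nonneg c])]
    linarith

theorem xyContactSupport_parabola (a c : ℝ) :
    xyContactSupport (a, (a ^ 2 - 1) / 2, c) =
      {p : ℝ × ℝ | p.1 ^ 2 + p.2 ^ 2 < 2}.indicator 1 (a, c) := by
  simp [xyContactSupport, indicator, xyDiskSupport_parabola, yzDiskSupport_parabola_lt_one_iff]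

/-- The density in `(a, c)` of the support function `xyDiskSupport` against the surface measure of
the unit sphere, where `(a, c)` stands for the direction of `(a, (a ^ 2 - 1) / 2, c)`. -/
noncomputable def parabolicDensity (p : ℝ × ℝ) : ℝ :=
  8 * (p.1 ^ 2 + 1) / ((p.1 ^ 2 + 1) ^ 2 + 4 * p.2 ^ 2) ^ 2

theorem lintegral_meridian_xyContactSupport (a : ℝ) :
    ENNReal.ofReal (2 / (1 + a ^ 2)) *
      ∫⁻ φ in Ioo 0 (π / 2), ENNReal.ofReal (sin φ) *
        xyContactSupport (sphericalDirection (2 * arctan a - π / 2) φ) =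
      ∫⁻ c in Ioi 0, {p : ℝ × ℝ | p.1 ^ 2 + p.2 ^ 2 < 2}.indicator
        (fun p ↦ ENNReal.ofReal (parabolicDensity p)) (a, c) := by
  have hm : 0 < (1 + a ^ 2) / 2 := by positivity
  rw [lintegral_meridian_eq hm, ← lintegral_const_mul' _ _ ENNReal.ofReal_ne_top]
  refine lintegral_congr fun c ↦ ?_
  have hN : 0 < ((1 + a ^ 2) / 2) ^ 2 + c ^ 2 := by positivity
  have chart : ((1 + a ^ 2) / 2 * cos (2 * arctan a - π / 2),
      (1 + a ^ 2) / 2 * sin (2 * arctan a - π / 2), c) = (a, (a ^ 2 - 1) / 2, c) := by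
    rw [cos_two_mul_arctan_sub_pi_div_two, sin_two_mul_arctan_sub_pi_div_two]
    congr 2 <;> field_simp
  have density : 2 / (1 + a ^ 2) * (((1 + a ^ 2) / 2) ^ 2 /
      √(((1 + a ^ 2) / 2) ^ 2 + c ^ 2) ^ 3) * (√(((1 + a ^ 2) / 2) ^ 2 + c ^ 2))⁻¹ =
      parabolicDensity (a, c) := by
    rw [mul_assoc, ← div_eq_mul_inv, div_div, ← pow_succ, show 3 + 1 = 2 * 2 from rfl, pow_mul,
      sq_sqrt hN.le, parabolicDensity]
    field_simp
    ring
  rw [chart, xyContactSupport_smul (by positivity), xyContactSupport_parabola,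
    ← mul_assoc (ENNReal.ofReal _), ← ENNReal.ofReal_mul (by positivity), ← mul_assoc,
    ← ENNReal.ofReal_mul (by positivity), density]
  simp [indicator]

theorem hemisphereLIntegral_xyContactSupport :
    hemisphereLIntegral (Ioo (-(π / 2)) (π / 2)) xyContactSupport =
      ∫⁻ a in Ioi 0, ∫⁻ c in Ioi 0, {p : ℝ × ℝ | p.1 ^ 2 + p.2 ^ 2 < 2}.indicator
        (fun p ↦ ENNReal.ofReal (parabolicDensity p)) (a, c) := by
  rw [hemisphereLIntegral, lintegral_Ioo_neg_pi_div_two_pi_div_two_eq_lintegral_arctan]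
  exact lintegral_congr lintegral_meridian_xyContactSupport

theorem mul_cos_mul_sin_mem_Ioi_prod_Ioi_iff {r t : ℝ} (hr : 0 < r) (ht : t ∈ Ioo (-π) π) :
    (r * cos t, r * sin t) ∈ Ioi (0 : ℝ) ×ˢ Ioi (0 : ℝ) ↔ t ∈ Ioo 0 (π / 2) := by
  simp only [mem_prod, mem_Ioi, mul_pos_iff_of_pos_left hr]
  constructor
  · rintro ⟨hcos, hsin⟩
    have ht₀ : 0 < t := by
      by_contra! h
      exact hsin.not_ge (sin_nonpos_of_nonpos_of_neg_pi_le h ht.1.le)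
    refine ⟨ht₀, ?_⟩
    by_contra! h
    exact hcos.not_ge (cos_nonpos_of_pi_div_two_le_of_le h (by linarith [ht.2, pi_pos]))
  · intro h
    exact ⟨cos_pos_of_mem_Ioo ⟨by linarith [h.1, pi_pos], h.2⟩,
      sin_pos_of_mem_Ioo ⟨h.1, by linarith [h.2, pi_pos]⟩⟩

theorem lintegral_Ioi_lintegral_Ioi_eq_polar {f : ℝ × ℝ → ℝ≥0∞} (hf : Measurable f) :
    ∫⁻ x in Ioi 0, ∫⁻ y in Ioi 0, f (x, y) =
      ∫⁻ t in Ioo 0 (π / 2), ∫⁻ r in Ioi 0, ENNReal.ofReal r * f (r * cos t, r * sin t) := by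
  have quadrant : MeasurableSet (Ioi (0 : ℝ) ×ˢ Ioi (0 : ℝ)) :=
    measurableSet_Ioi.prod measurableSet_Ioi
  have sector : MeasurableSet (Prod.snd ⁻¹' Ioo 0 (π / 2) : Set (ℝ × ℝ)) :=
    measurable_snd measurableSet_Ioo
  have hg : Measurable fun p : ℝ × ℝ ↦ ENNReal.ofReal p.1 * f (p.1 * cos p.2, p.1 * sin p.2) := by
    fun_prop
  calc
    _ = ∫⁻ p, (Ioi (0 : ℝ) ×ˢ Ioi (0 : ℝ)).indicator f p := by
      rw [lintegral_indicator quadrant, Measure.volume_eq_prod, ← Measure.prod_restrict,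
        lintegral_prod _ hf.aemeasurable]
    _ = ∫⁻ p in polarCoord.target, (Prod.snd ⁻¹' Ioo 0 (π / 2)).indicator
          (fun p ↦ ENNReal.ofReal p.1 * f (p.1 * cos p.2, p.1 * sin p.2)) p := by
      rw [← lintegral_comp_polarCoord_symm]
      refine setLIntegral_congr_fun polarCoord.open_target.measurableSet fun p hp ↦ ?_
      simp only [indicator, polarCoord_symm_apply, mul_cos_mul_sin_mem_Ioi_prod_Ioi_iff hp.1 hp.2,
        mem_preimage, smul_eq_mul, mul_ite, mul_zero]
    _ = ∫⁻ p in Ioi (0 : ℝ) ×ˢ Ioo 0 (π / 2),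
          ENNReal.ofReal p.1 * f (p.1 * cos p.2, p.1 * sin p.2) := by
      rw [lintegral_indicator sector, Measure.restrict_restrict sector]
      congr 2
      ext p
      simp only [polarCoord_target, mem_inter_iff, mem_preimage, mem_Ioo, mem_prod, mem_Ioi]
      grind [pi_pos]
    _ = _ := by
      rw [Measure.volume_eq_prod, ← Measure.prod_restrict, lintegral_prod_symm' _ hg]

theorem lintegral_quarter_disk_eq_polar {f : ℝ × ℝ → ℝ≥0∞} (hf : Measurable f) {R : ℝ}
    (hR : 0 ≤ R) :
    ∫⁻ x in Ioi 0, ∫⁻ y in Ioi 0, {p : ℝ × ℝ | p.1 ^ 2 + p.2 ^ 2 < R ^ 2}.indicator f (x, y) =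
      ∫⁻ t in Ioo 0 (π / 2), ∫⁻ r in Ioo 0 R, ENNReal.ofReal r * f (r * cos t, r * sin t) := by
  have disk : MeasurableSet {p : ℝ × ℝ | p.1 ^ 2 + p.2 ^ 2 < R ^ 2} :=
    measurableSet_lt (by fun_prop) (by fun_prop)
  rw [lintegral_Ioi_lintegral_Ioi_eq_polar (hf.indicator disk)]
  refine lintegral_congr fun t ↦ ?_
  rw [← Ioi_inter_Iio, inter_comm, ← setLIntegral_indicator measurableSet_Iio]
  refine setLIntegral_congr_fun measurableSet_Ioi fun r (hr : 0 < r) ↦ ?_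
  have hnorm : (r * cos t) ^ 2 + (r * sin t) ^ 2 = r ^ 2 := by
    rw [mul_pow, mul_pow, ← mul_add, cos_sq_add_sin_sq, mul_one]
  simp [indicator, hnorm, sq_lt_sq₀ hr.le hR]

theorem xyDiskSupport_nonneg (u : ℝ × ℝ × ℝ) : 0 ≤ xyDiskSupport u :=
  sub_nonneg.2 (le_sqrt_of_sq_le (le_add_of_nonneg_left (sq_nonneg u.1)))

theorem parabolicDensity_nonneg (p : ℝ × ℝ) : 0 ≤ parabolicDensity p := by
  unfold parabolicDensity
  positivity

theorem continuous_parabolicDensity : Continuous parabolicDensity := by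
  unfold parabolicDensity
  refine Continuous.div (by fun_prop) (by fun_prop) fun p ↦ ?_
  positivity

theorem continuous_polar_parabolicDensity :
    Continuous (Function.uncurry fun t r : ℝ ↦ r * parabolicDensity (r * cos t, r * sin t)) := by
  have := continuous_parabolicDensity
  unfold Function.uncurry
  fun_prop

theorem ofReal_integral_max_diskSupport :
    ENNReal.ofReal (∫ θ in (0 : ℝ)..π / 2, ∫ φ in (0 : ℝ)..π / 2,
        sin φ * max (xyDiskSupport (sphericalDirection θ φ))
          (yzDiskSupport (sphericalDirection θ φ))) =
      hemisphereLIntegral (Ioo 0 (π / 2))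
        (fun u ↦ ENNReal.ofReal (max (xyDiskSupport u) (yzDiskSupport u))) := by
  have sin_nonneg_of_mem : ∀ φ ∈ Ioo 0 (π / 2), 0 ≤ sin φ := fun φ hφ ↦
    sin_nonneg_of_nonneg_of_le_pi hφ.1.le (by linarith [hφ.2, pi_pos])
  rw [ofReal_intervalIntegral_intervalIntegral_eq_lintegral pi_div_two_pos.le pi_div_two_pos.le]
  · refine lintegral_congr fun θ ↦ setLIntegral_congr_fun measurableSet_Ioo fun φ hφ ↦ ?_
    exact ENNReal.ofReal_mul (sin_nonneg_of_mem φ hφ)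
  · unfold Function.uncurry xyDiskSupport yzDiskSupport sphericalDirection
    fun_prop
  · exact fun θ _ φ hφ ↦ mul_nonneg (sin_nonneg_of_mem φ hφ)
      (le_max_of_le_left (xyDiskSupport_nonneg _))

theorem ofReal_integral_polar_parabolicDensity :
    ENNReal.ofReal (∫ t in (0 : ℝ)..π / 2, ∫ r in (0 : ℝ)..√2,
        r * parabolicDensity (r * cos t, r * sin t)) =
      ∫⁻ a in Ioi 0, ∫⁻ c in Ioi 0, {p : ℝ × ℝ | p.1 ^ 2 + p.2 ^ 2 < 2}.indicator
        (fun p ↦ ENNReal.ofReal (parabolicDensity p)) (a, c) := by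
  have polar := lintegral_quarter_disk_eq_polar
    continuous_parabolicDensity.measurable.ennreal_ofReal (sqrt_nonneg 2)
  rw [sq_sqrt zero_le_two] at polar
  rw [polar, ofReal_intervalIntegral_intervalIntegral_eq_lintegral pi_div_two_pos.le
    (sqrt_nonneg 2) continuous_polar_parabolicDensity
    fun t _ r hr ↦ mul_nonneg hr.1.le (parabolicDensity_nonneg _)]
  exact lintegral_congr fun t ↦ setLIntegral_congr_fun measurableSet_Ioo fun r hr ↦
    ENNReal.ofReal_mul hr.1.le

theorem integral_max_diskSupport_eq_polar :
    ∫ θ in (0 : ℝ)..π / 2, ∫ φ in (0 : ℝ)..π / 2,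
        sin φ * max (xyDiskSupport (sphericalDirection θ φ))
          (yzDiskSupport (sphericalDirection θ φ)) =
      ∫ t in (0 : ℝ)..π / 2, ∫ r in (0 : ℝ)..√2,
        r * parabolicDensity (r * cos t, r * sin t) := by
  rw [← ENNReal.ofReal_eq_ofReal_iff, ofReal_integral_max_diskSupport,
    hemisphereLIntegral_octant_max_eq, hemisphereLIntegral_xyContactSupport,
    ofReal_integral_polar_parabolicDensity]
  · refine intervalIntegral.integral_nonneg pi_div_two_pos.le fun θ _ ↦
      intervalIntegral.integral_nonneg pi_div_two_pos.le fun φ hφ ↦ mul_nonneg ?_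
        (le_max_of_le_left (xyDiskSupport_nonneg _))
    exact sin_nonneg_of_nonneg_of_le_pi hφ.1 (by linarith [hφ.2, pi_pos])
  · exact intervalIntegral.integral_nonneg pi_div_two_pos.le fun t _ ↦
      intervalIntegral.integral_nonneg (sqrt_nonneg 2) fun r hr ↦
        mul_nonneg hr.1 (parabolicDensity_nonneg _)

/-! ### The radial integral -/

theorem polar_parabolicDensity_eq (r t : ℝ) :
    r * parabolicDensity (r * cos t, r * sin t) = 8 * r * (1 + (1 - sin t ^ 2) * r ^ 2) /
      ((1 + (1 + sin t) ^ 2 * r ^ 2) * (1 + (1 - sin t) ^ 2 * r ^ 2)) ^ 2 := by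
  have denominator : ((r * cos t) ^ 2 + 1) ^ 2 + 4 * (r * sin t) ^ 2 =
      (1 + (1 + sin t) ^ 2 * r ^ 2) * (1 + (1 - sin t) ^ 2 * r ^ 2) := by
    rw [mul_pow, cos_sq']
    ring
  rw [parabolicDensity, denominator, mul_pow, cos_sq']
  ring

theorem hasDerivAt_radial {s : ℝ} (hs : s ≠ 0) (r : ℝ) :
    HasDerivAt (fun r ↦ ((1 - s ^ 2) * r ^ 2 - 1) /
        ((1 + (1 + s) ^ 2 * r ^ 2) * (1 + (1 - s) ^ 2 * r ^ 2)) +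
        (1 - s ^ 2) / (4 * s) *
          (log (1 + (1 + s) ^ 2 * r ^ 2) - log (1 + (1 - s) ^ 2 * r ^ 2)))
      (8 * r * (1 + (1 - s ^ 2) * r ^ 2) /
        ((1 + (1 + s) ^ 2 * r ^ 2) * (1 + (1 - s) ^ 2 * r ^ 2)) ^ 2) r := by
  have hU : 1 + (1 + s) ^ 2 * r ^ 2 ≠ 0 := by positivity
  have hV : 1 + (1 - s) ^ 2 * r ^ 2 ≠ 0 := by positivity
  have deriv_quadratic : ∀ q : ℝ,
      HasDerivAt (fun r : ℝ ↦ 1 + q * r ^ 2) (q * (2 * r)) r := fun q ↦ by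
    simpa using ((hasDerivAt_pow 2 r).const_mul q).const_add 1
  have deriv_numerator : HasDerivAt (fun r : ℝ ↦ (1 - s ^ 2) * r ^ 2 - 1)
      ((1 - s ^ 2) * (2 * r)) r := by
    simpa using ((hasDerivAt_pow 2 r).const_mul (1 - s ^ 2)).sub_const 1
  have deriv_U := deriv_quadratic ((1 + s) ^ 2)
  have deriv_V := deriv_quadratic ((1 - s) ^ 2)
  convert! (deriv_numerator.div (deriv_U.mul deriv_V) (mul_ne_zero hU hV)).add
    (((deriv_U.log hU).sub (deriv_V.log hV)).const_mul ((1 - s ^ 2) / (4 * s))) using 1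
  simp only [Pi.mul_apply]
  field_simp
  ring

theorem integral_radial {s : ℝ} (hs : s ≠ 0) (R : ℝ) :
    ∫ r in (0 : ℝ)..R, 8 * r * (1 + (1 - s ^ 2) * r ^ 2) /
        ((1 + (1 + s) ^ 2 * r ^ 2) * (1 + (1 - s) ^ 2 * r ^ 2)) ^ 2 =
      1 + ((1 - s ^ 2) * R ^ 2 - 1) /
        ((1 + (1 + s) ^ 2 * R ^ 2) * (1 + (1 - s) ^ 2 * R ^ 2)) +
        (1 - s ^ 2) / (4 * s) *
          (log (1 + (1 + s) ^ 2 * R ^ 2) - log (1 + (1 - s) ^ 2 * R ^ 2)) := by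
  have integrand_continuous : Continuous fun r : ℝ ↦ 8 * r * (1 + (1 - s ^ 2) * r ^ 2) /
      ((1 + (1 + s) ^ 2 * r ^ 2) * (1 + (1 - s) ^ 2 * r ^ 2)) ^ 2 :=
    Continuous.div (by fun_prop) (by fun_prop) fun r ↦ by positivity
  rw [intervalIntegral.integral_eq_sub_of_hasDerivAt (fun r _ ↦ hasDerivAt_radial hs r)
    (integrand_continuous.intervalIntegrable _ _)]
  simp only [ne_eq, OfNat.ofNat_ne_zero, not_false_eq_true, zero_pow, mul_zero, zero_sub,
    add_zero, mul_one, div_one, log_one, sub_self, sub_neg_eq_add]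
  ring

theorem integral_polar_parabolicDensity {t : ℝ} (ht : sin t ≠ 0) :
    ∫ r in (0 : ℝ)..√2, r * parabolicDensity (r * cos t, r * sin t) =
      1 + cos (2 * t) / (9 - sin (2 * t) ^ 2) +
        (1 / sin t - sin t) / 4 * (log (1 + 2 * (1 + sin t) ^ 2) -
          log (1 + 2 * (1 - sin t) ^ 2)) := by
  simp_rw [polar_parabolicDensity_eq]
  rw [integral_radial ht, sq_sqrt zero_le_two, cos_two_mul', sin_two_mul, mul_pow, mul_pow,
    cos_sq', mul_comm ((1 + sin t) ^ 2) 2, mul_comm ((1 - sin t) ^ 2) 2]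
  congr 2
  · congr 1 <;> ring
  · field_simp

theorem integral_cos_two_mul_mul_comp_sin_two_mul (g : ℝ → ℝ) :
    ∫ t in (0 : ℝ)..π / 2, cos (2 * t) * g (sin (2 * t)) = 0 := by
  have reflect := intervalIntegral.integral_comp_sub_left
    (fun t ↦ cos (2 * t) * g (sin (2 * t))) (a := 0) (b := π / 2) (π / 2)
  simp only [mul_sub, mul_div_cancel₀ π (two_ne_zero' ℝ), cos_pi_sub, sin_pi_sub, neg_mul,
    intervalIntegral.integral_neg, sub_self, sub_zero] at reflect
  linarith

/-! ### The angular integral -/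

section Complex

open Complex (I slitPlane)

/-- The derivative of `t ↦ arctan (κ * tan t)`. With `κ = cos w` it is also, up to a factor
`2 * sin t`, the derivative of `sinLogRatio w (sin t)` in `w`. -/
noncomputable def arctanTanDensity (κ : ℂ) (t : ℝ) : ℂ :=
  κ / ((cos t : ℂ) ^ 2 + κ ^ 2 * (sin t : ℂ) ^ 2)

theorem cos_add_mul_I_mul_sin_mem_slitPlane {κ : ℂ} (hκ : 0 < κ.re) {t : ℝ}
    (ht : t ∈ Icc 0 (π / 2)) : cos t + κ * I * sin t ∈ slitPlane := by
  rcases ht.1.eq_or_lt with rfl | ht₀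
  · simp
  · right
    have hsin : 0 < sin t := sin_pos_of_mem_Ioo ⟨ht₀, by linarith [ht.2, pi_pos]⟩
    simp [-Complex.ofReal_cos, -Complex.ofReal_sin, hκ.ne', hsin.ne']

theorem cos_sub_mul_I_mul_sin_mem_slitPlane {κ : ℂ} (hκ : 0 < κ.re) {t : ℝ}
    (ht : t ∈ Icc 0 (π / 2)) : cos t - κ * I * sin t ∈ slitPlane := by
  rcases ht.1.eq_or_lt with rfl | ht₀
  · simp
  · right
    have hsin : 0 < sin t := sin_pos_of_mem_Ioo ⟨ht₀, by linarith [ht.2, pi_pos]⟩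
    simp [-Complex.ofReal_cos, -Complex.ofReal_sin, hκ.ne', hsin.ne']

theorem cos_sq_add_sq_mul_sin_sq_eq_mul (κ : ℂ) (t : ℝ) :
    (cos t : ℂ) ^ 2 + κ ^ 2 * (sin t : ℂ) ^ 2 =
      (cos t + κ * I * sin t) * (cos t - κ * I * sin t) := by
  linear_combination κ ^ 2 * (sin t : ℂ) ^ 2 * Complex.I_sq

theorem cos_sq_add_sq_mul_sin_sq_ne_zero {κ : ℂ} (hκ : 0 < κ.re) {t : ℝ}
    (ht : t ∈ Icc 0 (π / 2)) : (cos t : ℂ) ^ 2 + κ ^ 2 * (sin t : ℂ) ^ 2 ≠ 0 := by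
  rw [cos_sq_add_sq_mul_sin_sq_eq_mul]
  exact mul_ne_zero
    (Complex.slitPlane_ne_zero (cos_add_mul_I_mul_sin_mem_slitPlane hκ ht))
    (Complex.slitPlane_ne_zero (cos_sub_mul_I_mul_sin_mem_slitPlane hκ ht))

theorem hasDerivAt_log_cos_add_mul_I_mul_sin {κ : ℂ} (hκ : 0 < κ.re) {t : ℝ}
    (ht : t ∈ Icc 0 (π / 2)) :
    HasDerivAt (fun t : ℝ ↦ (Complex.log (cos t + κ * I * sin t) -
      Complex.log (cos t - κ * I * sin t)) / (2 * I))
      (arctanTanDensity κ t) t := by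
  have hadd := cos_add_mul_I_mul_sin_mem_slitPlane hκ ht
  have hsub := cos_sub_mul_I_mul_sin_mem_slitPlane hκ ht
  have deriv_cos := (hasDerivAt_cos t).ofReal_comp
  have deriv_sin := ((hasDerivAt_sin t).ofReal_comp).const_mul (κ * I)
  convert! (((deriv_cos.add deriv_sin).clog_real hadd).sub
    ((deriv_cos.sub deriv_sin).clog_real hsub)).div_const (2 * I) using 1
  have hadd₀ := Complex.slitPlane_ne_zero hadd
  have hsub₀ := Complex.slitPlane_ne_zero hsub
  have pythagoras : (sin t : ℂ) ^ 2 + (cos t : ℂ) ^ 2 = 1 := by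
    exact_mod_cast sin_sq_add_cos_sq t
  have numerator : (-(sin t : ℂ) + κ * I * cos t) * (cos t - κ * I * sin t) -
      (cos t + κ * I * sin t) * (-sin t - κ * I * cos t) = κ * (2 * I) := by
    linear_combination 2 * κ * I * pythagoras
  simp only [Pi.add_apply, Pi.sub_apply, Complex.ofReal_neg]
  rw [div_sub_div _ _ hadd₀ hsub₀, numerator, arctanTanDensity,
    cos_sq_add_sq_mul_sin_sq_eq_mul, div_right_comm,
    mul_div_cancel_right₀ _ (mul_ne_zero two_ne_zero Complex.I_ne_zero)]

theorem continuousOn_arctanTanDensity {κ : ℂ} (hκ : 0 < κ.re) :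
    ContinuousOn (arctanTanDensity κ) (Icc 0 (π / 2)) :=
  ContinuousOn.div (by fun_prop) (by fun_prop) fun _ ht ↦ cos_sq_add_sq_mul_sin_sq_ne_zero hκ ht

theorem intervalIntegrable_arctanTanDensity {κ : ℂ} (hκ : 0 < κ.re) :
    IntervalIntegrable (arctanTanDensity κ) volume 0 (π / 2) :=
  (continuousOn_arctanTanDensity hκ).intervalIntegrable_of_Icc pi_div_two_pos.le

theorem integral_arctanTanDensity {κ : ℂ} (hκ : 0 < κ.re) :
    ∫ t in (0 : ℝ)..π / 2, arctanTanDensity κ t = π / 2 := by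
  have him : 0 < (κ * I).im := by simpa using hκ
  have hlog : Complex.log (-(κ * I)) = Complex.log (κ * I) - π * I := by
    simp only [Complex.log, norm_neg, Complex.arg_neg_eq_arg_sub_pi_of_im_pos him]
    push_cast
    ring
  rw [intervalIntegral.integral_eq_sub_of_hasDerivAt
    (fun t ht ↦ hasDerivAt_log_cos_add_mul_I_mul_sin hκ (uIcc_of_le pi_div_two_pos.le ▸ ht))
    (intervalIntegrable_arctanTanDensity hκ)]
  simp only [cos_pi_div_two, sin_pi_div_two, cos_zero, sin_zero, Complex.ofReal_zero,
    Complex.ofReal_one, mul_zero, mul_one, zero_add, add_zero, zero_sub, sub_zero, hlog,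
    sub_sub_cancel, Complex.log_one, sub_self, zero_div]
  field_simp

/-- Twice the principal value of `artanh (sin w * s)`. -/
noncomputable def sinLogRatio (w : ℂ) (s : ℝ) : ℂ :=
  Complex.log (1 + Complex.sin w * s) - Complex.log (1 - Complex.sin w * s)

theorem cos_re_pos_of_abs_re_lt {w : ℂ} (hw : |w.re| < π / 2) : 0 < (Complex.cos w).re := by
  have := mul_pos (cos_pos_of_mem_Ioo (abs_lt.1 hw)) (cosh_pos w.im)
  rw [Complex.cos_eq]
  simpa [← Complex.ofReal_cos, ← Complex.ofReal_sin, ← Complex.ofReal_cosh,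
    ← Complex.ofReal_sinh] using this

theorem one_add_sin_mul_mem_slitPlane {w : ℂ} (hw : |w.re| < π / 2) {s : ℝ} (hs : |s| ≤ 1) :
    1 + Complex.sin w * s ∈ slitPlane := by
  have hcos := cos_pos_of_mem_Ioo (abs_lt.1 hw)
  have re_eq : (1 + Complex.sin w * s).re = 1 + sin w.re * cosh w.im * s := by
    rw [Complex.sin_eq]
    simp [← Complex.ofReal_cos, ← Complex.ofReal_sin, ← Complex.ofReal_cosh,
      ← Complex.ofReal_sinh]
  have im_eq : (1 + Complex.sin w * s).im = cos w.re * sinh w.im * s := by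
    rw [Complex.sin_eq]
    simp [← Complex.ofReal_cos, ← Complex.ofReal_sin, ← Complex.ofReal_cosh,
      ← Complex.ofReal_sinh]
  by_cases him : w.im = 0
  · left
    have hsin : |sin w.re * s| < 1 := by
      rw [abs_mul]
      refine (mul_le_of_le_one_right (abs_nonneg _) hs).trans_lt ?_
      rw [← sq_lt_one_iff_abs_lt_one, sin_sq]
      linarith [pow_pos hcos 2]
    rw [re_eq, him, cosh_zero, mul_one]
    linarith [(abs_lt.1 hsin).1]
  · by_cases hs₀ : s = 0
    · left
      simp [hs₀]
    · right
      rw [im_eq]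
      exact mul_ne_zero (mul_ne_zero hcos.ne' (sinh_ne_zero.2 him)) hs₀

theorem one_sub_sin_mul_mem_slitPlane {w : ℂ} (hw : |w.re| < π / 2) {s : ℝ} (hs : |s| ≤ 1) :
    1 - Complex.sin w * s ∈ slitPlane := by
  simpa [sub_eq_add_neg] using one_add_sin_mul_mem_slitPlane hw (s := -s) (by rwa [abs_neg])

theorem one_add_mul_one_sub_sin_mul_sin (w : ℂ) (t : ℝ) :
    (1 + Complex.sin w * sin t) * (1 - Complex.sin w * sin t) =
      (cos t : ℂ) ^ 2 + Complex.cos w ^ 2 * (sin t : ℂ) ^ 2 := by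
  have pythagoras : (sin t : ℂ) ^ 2 + (cos t : ℂ) ^ 2 = 1 := by
    exact_mod_cast sin_sq_add_cos_sq t
  linear_combination (-(sin t : ℂ) ^ 2) * Complex.sin_sq_add_cos_sq w - pythagoras

theorem abs_mul_re_lt_pi_div_two {z : ℂ} (hz : |z.re| < π / 2) {u : ℝ} (hu : u ∈ Icc (0 : ℝ) 1) :
    |(u * z).re| < π / 2 := by
  rw [Complex.re_ofReal_mul, abs_mul, abs_of_nonneg hu.1]
  exact (mul_le_of_le_one_left (abs_nonneg _) hu.2).trans_lt hz

theorem hasDerivAt_sinLogRatio_mul {z : ℂ} (hz : |z.re| < π / 2) {u : ℝ}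
    (hu : u ∈ Icc (0 : ℝ) 1) (t : ℝ) :
    HasDerivAt (fun u : ℝ ↦ sinLogRatio (u * z) (sin t))
      (2 * z * sin t * arctanTanDensity (Complex.cos (u * z)) t) u := by
  have hadd := one_add_sin_mul_mem_slitPlane (abs_mul_re_lt_pi_div_two hz hu) (abs_sin_le_one t)
  have hsub := one_sub_sin_mul_mem_slitPlane (abs_mul_re_lt_pi_div_two hz hu) (abs_sin_le_one t)
  have hadd₀ := Complex.slitPlane_ne_zero hadd
  have hsub₀ := Complex.slitPlane_ne_zero hsub
  have deriv_sin : HasDerivAt (fun u : ℝ ↦ Complex.sin (u * z) * sin t)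
      (Complex.cos (u * z) * z * sin t) u := by
    have := ((hasDerivAt_id (u : ℂ)).mul_const z).csin.comp_ofReal.mul_const (sin t : ℂ)
    simpa using this
  convert! ((deriv_sin.const_add 1).clog_real hadd).sub
    ((deriv_sin.const_sub 1).clog_real hsub) using 1
  rw [arctanTanDensity, ← one_add_mul_one_sub_sin_mul_sin, div_sub_div _ _ hadd₀ hsub₀,
    mul_div_assoc']
  congr 1
  ring

theorem continuousOn_arctanTanDensity_cos_mul {z : ℂ} (hz : |z.re| < π / 2) :
    ContinuousOn (Function.uncurry fun t u : ℝ ↦ arctanTanDensity (Complex.cos (u * z)) t)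
      (Icc 0 (π / 2) ×ˢ Icc 0 1) :=
  ContinuousOn.div (by fun_prop) (by fun_prop) fun _ hp ↦ cos_sq_add_sq_mul_sin_sq_ne_zero
    (cos_re_pos_of_abs_re_lt (abs_mul_re_lt_pi_div_two hz hp.2)) hp.1

theorem integrableOn_arctanTanDensity_cos_mul {z : ℂ} (hz : |z.re| < π / 2) :
    IntegrableOn (Function.uncurry fun t u : ℝ ↦ arctanTanDensity (Complex.cos (u * z)) t)
      (Ι 0 (π / 2) ×ˢ Ι 0 1) := by
  rw [uIoc_of_le pi_div_two_pos.le, uIoc_of_le zero_le_one]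
  exact ((continuousOn_arctanTanDensity_cos_mul hz).integrableOn_compact
    (isCompact_Icc.prod isCompact_Icc)).mono_set
      (prod_mono Ioc_subset_Icc_self Ioc_subset_Icc_self)

theorem sinLogRatio_eq_integral {z : ℂ} (hz : |z.re| < π / 2) {t : ℝ}
    (ht : t ∈ Icc 0 (π / 2)) : sinLogRatio z (sin t) =
      2 * z * sin t * ∫ u in (0 : ℝ)..1, arctanTanDensity (Complex.cos (u * z)) t := by
  have slice_continuous : ContinuousOn
      (fun u : ℝ ↦ arctanTanDensity (Complex.cos (u * z)) t) (Icc 0 1) :=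
    ContinuousOn.comp (f := fun u : ℝ ↦ (t, u)) (continuousOn_arctanTanDensity_cos_mul hz)
      (by fun_prop) fun u hu ↦ ⟨ht, hu⟩
  have slice_integrable :=
    (slice_continuous.intervalIntegrable_of_Icc (μ := volume) zero_le_one).const_mul
      (2 * z * sin t)
  have deriv_slice : ∀ u ∈ [[(0 : ℝ), 1]], HasDerivAt (fun u : ℝ ↦ sinLogRatio (u * z) (sin t))
      (2 * z * sin t * arctanTanDensity (Complex.cos (u * z)) t) u := fun u hu ↦
    hasDerivAt_sinLogRatio_mul hz (by rwa [uIcc_of_le zero_le_one] at hu) t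
  rw [← intervalIntegral.integral_const_mul,
    intervalIntegral.integral_eq_sub_of_hasDerivAt deriv_slice slice_integrable]
  simp [sinLogRatio]

theorem eqOn_sinLogRatio_div_sin {z : ℂ} (hz : |z.re| < π / 2) :
    EqOn (fun t : ℝ ↦ 2 * z * ∫ u in (0 : ℝ)..1, arctanTanDensity (Complex.cos (u * z)) t)
      (fun t ↦ sinLogRatio z (sin t) / sin t) (Ioo 0 (π / 2)) := by
  intro t ht
  have hsin : (sin t : ℂ) ≠ 0 := by
    exact_mod_cast (sin_pos_of_mem_Ioo ⟨ht.1, by linarith [ht.2, pi_pos]⟩).ne'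
  simp only [sinLogRatio_eq_integral hz (Ioo_subset_Icc_self ht)]
  field_simp

theorem intervalIntegrable_sinLogRatio_div_sin {z : ℂ} (hz : |z.re| < π / 2) :
    IntervalIntegrable (fun t ↦ sinLogRatio z (sin t) / sin t) volume 0 (π / 2) := by
  have integrable_prod := integrableOn_arctanTanDensity_cos_mul hz
  rw [IntegrableOn, Measure.volume_eq_prod, ← Measure.prod_restrict] at integrable_prod
  have integrable_average : IntervalIntegrable
      (fun t ↦ ∫ u in (0 : ℝ)..1, arctanTanDensity (Complex.cos (u * z)) t)
      volume 0 (π / 2) := by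
    rw [intervalIntegrable_iff]
    simp only [intervalIntegral.integral_of_le zero_le_one, ← uIoc_of_le (zero_le_one' ℝ)]
    exact integrable_prod.integral_prod_left
  refine (integrable_average.const_mul (2 * z)).congr_uIoo ?_
  rw [uIoo_of_le pi_div_two_pos.le]
  exact eqOn_sinLogRatio_div_sin hz

theorem integral_sinLogRatio_div_sin {z : ℂ} (hz : |z.re| < π / 2) :
    ∫ t in (0 : ℝ)..π / 2, sinLogRatio z (sin t) / sin t = π * z := by
  rw [← intervalIntegral.integral_congr_Ioo_of_le pi_div_two_pos.le
    (eqOn_sinLogRatio_div_sin hz), intervalIntegral.integral_const_mul,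
    intervalIntegral_intervalIntegral_swap (integrableOn_arctanTanDensity_cos_mul hz)]
  have inner_eq : ∫ u in (0 : ℝ)..1, ∫ t in (0 : ℝ)..π / 2,
      arctanTanDensity (Complex.cos (u * z)) t = ∫ _ in (0 : ℝ)..1, (π / 2 : ℂ) := by
    refine intervalIntegral.integral_congr fun u hu ↦ ?_
    rw [uIcc_of_le zero_le_one] at hu
    exact integral_arctanTanDensity (cos_re_pos_of_abs_re_lt (abs_mul_re_lt_pi_div_two hz hu))
  rw [inner_eq, intervalIntegral.integral_const, sub_zero, one_smul]
  ring

theorem hasDerivAt_sinLogRatio_sin {z : ℂ} (hz : |z.re| < π / 2) (t : ℝ) :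
    HasDerivAt (fun t ↦ sinLogRatio z (sin t)) (2 * Complex.sin z * cos t /
      ((cos t : ℂ) ^ 2 + Complex.cos z ^ 2 * (sin t : ℂ) ^ 2)) t := by
  have hadd := one_add_sin_mul_mem_slitPlane hz (abs_sin_le_one t)
  have hsub := one_sub_sin_mul_mem_slitPlane hz (abs_sin_le_one t)
  have deriv_sin := (hasDerivAt_sin t).ofReal_comp.const_mul (Complex.sin z)
  convert! ((deriv_sin.const_add 1).clog_real hadd).sub
    ((deriv_sin.const_sub 1).clog_real hsub) using 1
  rw [← one_add_mul_one_sub_sin_mul_sin, div_sub_div _ _ (Complex.slitPlane_ne_zero hadd)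
    (Complex.slitPlane_ne_zero hsub)]
  congr 1
  ring

theorem continuous_sinLogRatio_sin {z : ℂ} (hz : |z.re| < π / 2) :
    Continuous fun t ↦ sinLogRatio z (sin t) :=
  continuous_iff_continuousAt.2 fun t ↦ (hasDerivAt_sinLogRatio_sin hz t).continuousAt

theorem hasDerivAt_neg_cos_mul_sinLogRatio {z : ℂ} (hz : |z.re| < π / 2)
    (hz₀ : Complex.sin z ≠ 0) {t : ℝ} (ht : t ∈ Icc 0 (π / 2)) :
    HasDerivAt (fun t : ℝ ↦ 2 / Complex.sin z * t - cos t * sinLogRatio z (sin t))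
      (sin t * sinLogRatio z (sin t) +
        2 * Complex.cos z / Complex.sin z * arctanTanDensity (Complex.cos z) t) t := by
  have deriv_linear : HasDerivAt (fun t : ℝ ↦ 2 / Complex.sin z * (t : ℂ))
      (2 / Complex.sin z) t := by
    simpa using (hasDerivAt_id t).ofReal_comp.const_mul (2 / Complex.sin z)
  convert! deriv_linear.sub
    ((hasDerivAt_cos t).ofReal_comp.mul (hasDerivAt_sinLogRatio_sin hz t)) using 1
  have hD := cos_sq_add_sq_mul_sin_sq_ne_zero (cos_re_pos_of_abs_re_lt hz) ht
  have pythagoras : (sin t : ℂ) ^ 2 + (cos t : ℂ) ^ 2 = 1 := by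
    exact_mod_cast sin_sq_add_cos_sq t
  rw [arctanTanDensity, Complex.ofReal_neg]
  set D := (cos t : ℂ) ^ 2 + Complex.cos z ^ 2 * (sin t : ℂ) ^ 2 with hD_def
  field_simp
  rw [hD_def]
  linear_combination 2 * (cos t : ℂ) ^ 2 * Complex.sin_sq_add_cos_sq z -
    2 * Complex.cos z ^ 2 * pythagoras

theorem integral_sin_mul_sinLogRatio {z : ℂ} (hz : |z.re| < π / 2) (hz₀ : Complex.sin z ≠ 0) :
    ∫ t in (0 : ℝ)..π / 2, sin t * sinLogRatio z (sin t) =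
      π * (1 - Complex.cos z) / Complex.sin z := by
  have integrable_left : IntervalIntegrable (fun t ↦ sin t * sinLogRatio z (sin t))
      volume 0 (π / 2) := by
    have := continuous_sinLogRatio_sin hz
    exact Continuous.intervalIntegrable (by fun_prop) _ _
  have integrable_right := (intervalIntegrable_arctanTanDensity
    (cos_re_pos_of_abs_re_lt hz)).const_mul (2 * Complex.cos z / Complex.sin z)
  have by_parts := intervalIntegral.integral_eq_sub_of_hasDerivAt
    (fun t ht ↦ hasDerivAt_neg_cos_mul_sinLogRatio hz hz₀ (uIcc_of_le pi_div_two_pos.le ▸ ht))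
    (integrable_left.add integrable_right)
  rw [intervalIntegral.integral_add integrable_left integrable_right,
    intervalIntegral.integral_const_mul,
    integral_arctanTanDensity (cos_re_pos_of_abs_re_lt hz)] at by_parts
  simp only [cos_pi_div_two, sin_zero, sinLogRatio, Complex.ofReal_zero, mul_zero, zero_mul,
    add_zero, sub_zero, sub_self, Complex.ofReal_div, Complex.ofReal_ofNat] at by_parts ⊢
  linear_combination by_parts

/-- The complex angle `z` with sine `(2 + √2 * I) / 3`, for which the quadratics
`1 + 2 * (1 ± s) ^ 2` of the radial integral are `3 * ‖1 ± sin z * s‖ ^ 2`. -/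
noncomputable def contactAngle : ℂ := arcsin (1 / √3) + arsinh (1 / √3) * I

theorem contactAngle_re : contactAngle.re = arcsin (1 / √3) := by
  simp [contactAngle]

theorem sin_arcsin_one_div_sqrt_three : sin (arcsin (1 / √3)) = 1 / √3 :=
  sin_arcsin (by linarith [show (0 : ℝ) ≤ 1 / √3 by positivity])
    (div_le_one_of_le₀ (one_le_sqrt.2 (by norm_num)) (sqrt_nonneg 3))

theorem abs_re_contactAngle_lt : |contactAngle.re| < π / 2 := by
  have h_one_lt : 1 / √3 < 1 := (div_lt_one (by positivity)).2 (lt_sqrt_of_sq_lt (by norm_num))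
  have h_pos : (0 : ℝ) < 1 / √3 := by positivity
  rw [contactAngle_re, abs_of_pos (arcsin_pos.2 h_pos)]
  exact arcsin_lt_pi_div_two.2 h_one_lt

theorem two_mul_re_contactAngle : 2 * contactAngle.re = arccos (1 / 3) := by
  have hcos : cos (2 * contactAngle.re) = 1 / 3 := by
    rw [cos_two_mul, cos_sq', contactAngle_re, sin_arcsin_one_div_sqrt_three, div_pow,
      sq_sqrt zero_le_three]
    norm_num
  have h_nonneg : 0 ≤ contactAngle.re := by
    rw [contactAngle_re]
    exact arcsin_nonneg.2 (by positivity)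
  rw [← hcos, arccos_cos (by linarith) (by linarith [(abs_lt.1 abs_re_contactAngle_lt).2])]

theorem cos_arcsin_one_div_sqrt_three : cos (arcsin (1 / √3)) = √2 / √3 := by
  rw [cos_arcsin, div_pow, sq_sqrt zero_le_three, ← sqrt_div zero_le_two]
  norm_num

theorem cosh_arsinh_one_div_sqrt_three : cosh (arsinh (1 / √3)) = 2 / √3 := by
  rw [cosh_arsinh, div_pow, sq_sqrt zero_le_three, eq_div_iff (by positivity),
    ← sqrt_mul (by positivity), sqrt_eq_iff_mul_self_eq] <;>
    norm_num

theorem sin_contactAngle : Complex.sin contactAngle = (2 + √2 * I) / 3 := by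
  have h_sq : (√3 : ℂ) * √3 = 3 := by exact_mod_cast mul_self_sqrt zero_le_three
  rw [contactAngle, Complex.sin_add_mul_I, ← Complex.ofReal_sin, ← Complex.ofReal_cos,
    ← Complex.ofReal_sinh, ← Complex.ofReal_cosh, sin_arcsin_one_div_sqrt_three,
    cos_arcsin_one_div_sqrt_three, cosh_arsinh_one_div_sqrt_three, sinh_arsinh, ← h_sq]
  push_cast
  ring

theorem cos_contactAngle : Complex.cos contactAngle = (2 * √2 - I) / 3 := by
  have h_sq : (√3 : ℂ) * √3 = 3 := by exact_mod_cast mul_self_sqrt zero_le_three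
  rw [contactAngle, Complex.cos_add_mul_I, ← Complex.ofReal_sin, ← Complex.ofReal_cos,
    ← Complex.ofReal_sinh, ← Complex.ofReal_cosh, sin_arcsin_one_div_sqrt_three,
    cos_arcsin_one_div_sqrt_three, cosh_arsinh_one_div_sqrt_three, sinh_arsinh, ← h_sq]
  push_cast
  ring

theorem sin_contactAngle_ne_zero : Complex.sin contactAngle ≠ 0 := by
  rw [sin_contactAngle]
  intro h
  simpa using congrArg Complex.re h

theorem re_one_sub_cos_div_sin_contactAngle :
    ((1 - Complex.cos contactAngle) / Complex.sin contactAngle).re = 1 - √2 / 2 := by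
  have h_sq : (√2 : ℂ) ^ 2 = 2 := by exact_mod_cast sq_sqrt zero_le_two
  have quotient : (1 - Complex.cos contactAngle) / Complex.sin contactAngle =
      ((1 - √2 / 2 : ℝ) : ℂ) * (1 + I) := by
    rw [div_eq_iff sin_contactAngle_ne_zero, sin_contactAngle, cos_contactAngle]
    push_cast
    linear_combination (I - 1) / 6 * h_sq + (√2 ^ 2 / 6 - √2 / 3) * Complex.I_sq
  rw [quotient, Complex.re_ofReal_mul, Complex.add_re, Complex.I_re, Complex.one_re, add_zero,
    mul_one]

theorem norm_one_add_sin_contactAngle_mul_sq (s : ℝ) :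
    ‖1 + Complex.sin contactAngle * s‖ ^ 2 = (1 + 2 * (1 + s) ^ 2) / 3 := by
  have re_add_im : 1 + Complex.sin contactAngle * s =
      ((1 + 2 / 3 * s : ℝ) : ℂ) + (√2 / 3 * s : ℝ) * I := by
    rw [sin_contactAngle]
    push_cast
    ring
  rw [re_add_im, ← Complex.normSq_eq_norm_sq, Complex.normSq_add_mul_I, mul_pow, div_pow,
    sq_sqrt zero_le_two]
  ring

theorem re_sinLogRatio_contactAngle (s : ℝ) : (sinLogRatio contactAngle s).re =
    (log (1 + 2 * (1 + s) ^ 2) - log (1 + 2 * (1 - s) ^ 2)) / 2 := by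
  have log_norm (s : ℝ) : log ‖1 + Complex.sin contactAngle * s‖ =
      (log (1 + 2 * (1 + s) ^ 2) - log 3) / 2 := by
    rw [← log_div (by positivity) three_ne_zero, ← norm_one_add_sin_contactAngle_mul_sq, log_pow]
    push_cast
    ring
  have log_norm_neg := log_norm (-s)
  rw [Complex.ofReal_neg, mul_neg, ← sub_eq_add_neg, ← sub_eq_add_neg] at log_norm_neg
  rw [sinLogRatio, Complex.sub_re, Complex.log_re, Complex.log_re, log_norm, log_norm_neg]
  ring

theorem integral_polar_parabolicDensity_eq_re {t : ℝ} (ht : sin t ≠ 0) :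
    ∫ r in (0 : ℝ)..√2, r * parabolicDensity (r * cos t, r * sin t) =
      1 + cos (2 * t) / (9 - sin (2 * t) ^ 2) +
        (sinLogRatio contactAngle (sin t) / sin t -
          sin t * sinLogRatio contactAngle (sin t)).re / 2 := by
  rw [integral_polar_parabolicDensity ht, Complex.sub_re, Complex.div_ofReal_re,
    Complex.re_ofReal_mul, re_sinLogRatio_contactAngle]
  ring

theorem intervalIntegrable_sinLogRatio_contactAngle : IntervalIntegrable
    (fun t ↦ sinLogRatio contactAngle (sin t) / sin t -
      sin t * sinLogRatio contactAngle (sin t)) volume 0 (π / 2) := by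
  have := continuous_sinLogRatio_sin abs_re_contactAngle_lt
  exact (intervalIntegrable_sinLogRatio_div_sin abs_re_contactAngle_lt).sub
    (Continuous.intervalIntegrable (by fun_prop) _ _)

theorem integral_re_sinLogRatio_contactAngle :
    ∫ t in (0 : ℝ)..π / 2, (sinLogRatio contactAngle (sin t) / sin t -
        sin t * sinLogRatio contactAngle (sin t)).re =
      π / 2 * (arccos (1 / 3) + √2 - 2) := by
  have := continuous_sinLogRatio_sin abs_re_contactAngle_lt
  refine (intervalIntegral.intervalIntegral_re (𝕜 := ℂ)
    intervalIntegrable_sinLogRatio_contactAngle).trans ?_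
  rw [intervalIntegral.integral_sub
    (intervalIntegrable_sinLogRatio_div_sin abs_re_contactAngle_lt)
    (Continuous.intervalIntegrable (by fun_prop) _ _),
    integral_sinLogRatio_div_sin abs_re_contactAngle_lt,
    integral_sin_mul_sinLogRatio abs_re_contactAngle_lt sin_contactAngle_ne_zero, mul_div_assoc,
    ← mul_sub, RCLike.re_to_complex, Complex.re_ofReal_mul, Complex.sub_re,
    re_one_sub_cos_div_sin_contactAngle]
  linear_combination π / 2 * two_mul_re_contactAngle

theorem integral_integral_polar_parabolicDensity :
    ∫ t in (0 : ℝ)..π / 2, ∫ r in (0 : ℝ)..√2, r * parabolicDensity (r * cos t, r * sin t) =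
      π / 4 * (√2 + arccos (1 / 3)) := by
  have rational_continuous : Continuous fun t : ℝ ↦ cos (2 * t) / (9 - sin (2 * t) ^ 2) :=
    Continuous.div (by fun_prop) (by fun_prop) fun t ↦ by linarith [sin_sq_le_one (2 * t)]
  have rational_integral : ∫ t in (0 : ℝ)..π / 2, cos (2 * t) / (9 - sin (2 * t) ^ 2) = 0 := by
    simpa only [div_eq_mul_inv] using
      integral_cos_two_mul_mul_comp_sin_two_mul fun x ↦ (9 - x ^ 2)⁻¹
  have rational_integrable := rational_continuous.intervalIntegrable (μ := volume) 0 (π / 2)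
  have re_integrable : IntervalIntegrable (fun t ↦ (sinLogRatio contactAngle (sin t) / sin t -
      sin t * sinLogRatio contactAngle (sin t)).re) volume 0 (π / 2) :=
    ⟨intervalIntegrable_sinLogRatio_contactAngle.1.re,
      intervalIntegrable_sinLogRatio_contactAngle.2.re⟩
  rw [intervalIntegral.integral_congr_Ioo_of_le pi_div_two_pos.le fun t ht ↦
      integral_polar_parabolicDensity_eq_re
        (sin_pos_of_mem_Ioo ⟨ht.1, by linarith [ht.2, pi_pos]⟩).ne',
    intervalIntegral.integral_add (intervalIntegrable_const.add rational_integrable)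
      (re_integrable.div_const 2),
    intervalIntegral.integral_add intervalIntegrable_const rational_integrable,
    rational_integral, intervalIntegral.integral_div, integral_re_sinLogRatio_contactAngle,
    intervalIntegral.integral_const, smul_eq_mul]
  ring

end Complex

/-- the direct mean-width double integral for Example 3 equals
(π/4)(√2 + arccos(1/3)). -/
theorem mean_width_example_three_direct :
    (∫ θ in (0 : ℝ)..(Real.pi / 2), ∫ φ in (0 : ℝ)..(Real.pi / 2),
        max ((1 - Real.sin θ) * Real.sin φ)
            (Real.sin θ * Real.sin φ
              + Real.sqrt (Real.sin θ ^ 2 * Real.sin φ ^ 2 + Real.cos φ ^ 2))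
          * Real.sin φ) =
      (Real.pi / 4) * (Real.sqrt 2 + Real.arccos (1 / 3)) := by
  rw [← integral_integral_polar_parabolicDensity, ← integral_max_diskSupport_eq_polar]
  refine intervalIntegral.integral_congr fun θ _ ↦ intervalIntegral.integral_congr fun φ hφ ↦ ?_
  rw [uIcc_of_le pi_div_two_pos.le] at hφ
  have hsin : 0 ≤ sin φ := sin_nonneg_of_nonneg_of_le_pi hφ.1 (by linarith [hφ.2, pi_pos])
  simp only [xyDiskSupport_sphericalDirection θ hsin, yzDiskSupport_sphericalDirection]
  rw [mul_comm (sin φ), add_comm (sin θ * sin φ)]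
end
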